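/- arXiv:1901.03406 — 3 statements merged into one kernel-verified Lean document; each statement's English description precedes it below -/
import Mathlib

section
/- Let G be an infinite discrete group. Then the Bernoulli flow 2^G is disjoint from every minimal G-flow; that is, for every minimal G-flow X, the only closed G-invariant subset of X × 2^G that projects onto both X and 2^G is X × 2^G itself. -/
open Pointwise

section Defs

variable (G : Type*) [Group G]

/-- The right-shift of `G` on `G → A`: `(g • z) h = z (h * g)`. -/
instance (priority := high) shiftSMul (A : Type*) : SMul G (G → A) :=
  ⟨fun g z h => z (h * g)⟩

/-- The right-shift action of `G` on `G → A` is a `G`-action (the Bernoulli flow when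
`A = Bool`). -/
instance shiftMulAction (A : Type*) : MulAction G (G → A) where
  one_smul z := funext fun h => by show z (h * 1) = z h; rw [mul_one]
  mul_smul g₁ g₂ z := funext fun h => by
    show z (h * (g₁ * g₂)) = z (h * g₁ * g₂)
    rw [mul_assoc]

/-- `S ⊆ G` is `D`-separated if `Dg ∩ Dh = ∅` for all distinct `g, h ∈ S`. -/
def DSeparated (D S : Set G) : Prop :=
  ∀ g ∈ S, ∀ h ∈ S, g ≠ h → Disjoint (D * ({g} : Set G)) (D * ({h} : Set G))

/-- The separated covering property for a `G`-flow `X`: for every finite `D ⊆ G`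
and every nonempty open `U ⊆ X` there is a `D`-separated `S ⊆ G` with `S⁻¹U = X`. -/
def SCP (X : Type*) [TopologicalSpace X] [MulAction G X] : Prop :=
  ∀ D : Set G, D.Finite → ∀ U : Set X, IsOpen U → U.Nonempty →
    ∃ S : Set G, DSeparated G D S ∧ ∀ x : X, ∃ s ∈ S, s • x ∈ U

/-- A `G`-flow is minimal if every orbit is dense. -/
def IsMinimalFlow (X : Type*) [TopologicalSpace X] [MulAction G X] : Prop :=
  ∀ x : X, Dense (MulAction.orbit G x)

/-- Two `G`-flows `X` and `Y` are disjoint if the only closed `G`-invariant subset of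
`X × Y` projecting onto both factors is `X × Y` itself. -/
def FlowsDisjoint (X Y : Type*) [TopologicalSpace X] [TopologicalSpace Y]
    [MulAction G X] [MulAction G Y] : Prop :=
  ∀ J : Set (X × Y), IsClosed J → (∀ (g : G), ∀ p ∈ J, g • p ∈ J) →
    Prod.fst '' J = Set.univ → Prod.snd '' J = Set.univ → J = Set.univ

end Defs

/-!
Two facts combine: an infinite group's minimal flows have the separated covering property, and
that property forces disjointness from every full shift.

For the second, take a point `(x, w)`, a neighbourhood `U` of `x` and a finite window `D ⊆ G`. If
`S` is `D`-separated with `S⁻¹U = X`, the windows `Ds` for `s ∈ S` do not overlap, so a single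
configuration `z` can display `w` on all of them. Whatever `x'` is paired with `z` in a joining,
some `s ∈ S` moves `x'` into `U` and `z` to a configuration agreeing with `w` on `D`.

For the first, colour `G` by independent fair coins and let `S` consist of those `g` whose coin
is the only `true` on `D⁻¹Dg`; such a set is always `D`-separated. Fix `y ∈ U`. The set of `g`
with `gy ∈ U` is infinite, hence contains a `D⁻¹D`-separated set `A` of any prescribed size `N`.
The event `Ag ∩ S = ∅` is an intersection of `N` independent events, so its probability `q ^ N`
is exponentially small, while it shares coordinates with only `O(N ^ 2)` of the other such
events. For large `N` the local lemma and compactness provide a colouring for which `S` meets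
every `Ag`. By minimality each `x ∈ X` has a translate `gx` so close to `y` that `Agx ⊆ U`, and
then any `s ∈ Ag ∩ S` takes `x` into `U`.
-/

open MeasureTheory ProbabilityTheory Set Topology
open Filter (Tendsto atTop)
open scoped Finset

section LocalLemma

variable {Ω ι : Type*} [MeasurableSpace Ω] {μ : Measure Ω}

theorem measureReal_le_inter_biInter_compl_add_sum [IsFiniteMeasure μ] (C : Set Ω)
    (B : ι → Set Ω) (T : Finset ι) :
    μ.real C ≤ μ.real (C ∩ ⋂ j ∈ T, (B j)ᶜ) + ∑ j ∈ T, μ.real (B j ∩ C) := by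
  have hcover : C ⊆ (C ∩ ⋂ j ∈ T, (B j)ᶜ) ∪ ⋃ j ∈ T, B j ∩ C := by
    intro ω hω
    by_cases hT : ∃ j ∈ T, ω ∈ B j
    · obtain ⟨j, hj, hjω⟩ := hT
      exact .inr (mem_biUnion hj ⟨hjω, hω⟩)
    · push Not at hT
      exact .inl ⟨hω, mem_iInter₂.2 hT⟩
  calc
    μ.real C ≤ μ.real (C ∩ ⋂ j ∈ T, (B j)ᶜ) + μ.real (⋃ j ∈ T, B j ∩ C) :=
      (measureReal_mono hcover).trans (measureReal_union_le _ _)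
    _ ≤ _ := by
      gcongr
      exact measureReal_biUnion_finset_le _ _

variable {B : ι → Set Ω} {nbr : ι → Finset ι} {p : ℝ} {d : ℕ}

theorem measureReal_inter_biInter_compl_le [IsFiniteMeasure μ] (hp : 0 ≤ p)
    (hB : ∀ i, ∀ T : Finset ι, Disjoint T (nbr i) →
      μ.real (B i ∩ ⋂ j ∈ T, (B j)ᶜ) ≤ p * μ.real (⋂ j ∈ T, (B j)ᶜ))
    (hnbr : ∀ i, #(nbr i) ≤ d) (hpd : 4 * p * d ≤ 1) (T : Finset ι) (i : ι) :
    μ.real (B i ∩ ⋂ j ∈ T, (B j)ᶜ) ≤ 2 * p * μ.real (⋂ j ∈ T, (B j)ᶜ) := by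
  classical
  induction T using Finset.strongInduction generalizing i with
  | H T ih =>
  set far := T \ nbr i
  set near := T ∩ nbr i
  set L := μ.real (⋂ j ∈ T, (B j)ᶜ)
  set M := μ.real (⋂ j ∈ far, (B j)ᶜ)
  have hnear (j : ι) (hj : j ∈ near) : μ.real (B j ∩ ⋂ k ∈ far, (B k)ᶜ) ≤ 2 * p * M := by
    have hjT := Finset.mem_inter.1 hj
    refine ih far ⟨Finset.sdiff_subset, fun hTfar ↦ ?_⟩ j
    exact (Finset.mem_sdiff.1 (hTfar hjT.1)).2 hjT.2
  have hsplit : (⋂ j ∈ far, (B j)ᶜ) ∩ ⋂ j ∈ near, (B j)ᶜ = ⋂ j ∈ T, (B j)ᶜ := by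
    rw [← Finset.set_biInter_inter, Finset.sdiff_union_inter]
  have hML : M ≤ 2 * L := by
    have hM : M ≤ L + d * (2 * p * M) := calc
      M ≤ L + ∑ j ∈ near, μ.real (B j ∩ ⋂ k ∈ far, (B k)ᶜ) := by
        simpa only [hsplit] using
          measureReal_le_inter_biInter_compl_add_sum (⋂ j ∈ far, (B j)ᶜ) B near
      _ ≤ L + #near * (2 * p * M) := by
        gcongr
        simpa only [nsmul_eq_mul] using Finset.sum_le_card_nsmul near _ _ hnear
      _ ≤ L + d * (2 * p * M) := by
        gcongr
        exact (Finset.card_le_card Finset.inter_subset_right).trans (hnbr i)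
    have : 4 * p * d * M ≤ 1 * M := by gcongr
    linarith
  calc
    μ.real (B i ∩ ⋂ j ∈ T, (B j)ᶜ) ≤ μ.real (B i ∩ ⋂ j ∈ far, (B j)ᶜ) := by
      refine measureReal_mono (inter_subset_inter_right _ ?_)
      exact biInter_subset_biInter_left Finset.sdiff_subset
    _ ≤ p * M := hB i far Finset.sdiff_disjoint
    _ ≤ p * (2 * L) := by gcongr
    _ = 2 * p * L := by ring

theorem lovasz_local_lemma [IsFiniteMeasure μ] [NeZero μ] (hmeas : ∀ i, MeasurableSet (B i))
    (hp : 0 ≤ p)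
    (hB : ∀ i, ∀ T : Finset ι, Disjoint T (nbr i) →
      μ.real (B i ∩ ⋂ j ∈ T, (B j)ᶜ) ≤ p * μ.real (⋂ j ∈ T, (B j)ᶜ))
    (hnbr : ∀ i, #(nbr i) ≤ d) (hpd : 4 * p * d ≤ 1) (hp2 : 2 * p < 1) (T : Finset ι) :
    0 < μ.real (⋂ j ∈ T, (B j)ᶜ) := by
  classical
  induction T using Finset.induction_on with
  | empty => simp [measureReal_univ_pos]
  | insert i T _ ih =>
    have hle := measureReal_inter_biInter_compl_le hp hB hnbr hpd T i
    have hadd := measureReal_inter_add_sdiff (μ := μ) (s := ⋂ j ∈ T, (B j)ᶜ) (hmeas i)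
    rw [Finset.set_biInter_insert, inter_comm, ← sdiff_eq]
    rw [inter_comm] at hadd
    nlinarith

end LocalLemma

section CylinderEvents

variable {ι : Type*} {X : ι → Type*} [∀ i, MeasurableSpace (X i)]

theorem indep_cylinderEvents_infinitePi (μ : ∀ i, Measure (X i)) [∀ i, IsProbabilityMeasure (μ i)]
    {S T : Set ι} (hST : Disjoint S T) :
    Indep (cylinderEvents S) (cylinderEvents T) (Measure.infinitePi μ) :=
  indep_iSup_of_disjoint (fun i ↦ (measurable_pi_apply i).comap_le)
    (iIndepFun_infinitePi (P := μ) (X := fun _ ↦ id) fun _ ↦ measurable_id).iIndep hST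

theorem measureReal_inter_of_disjoint_cylinderEvents (μ : ∀ i, Measure (X i))
    [∀ i, IsProbabilityMeasure (μ i)] {S T : Set ι} (hST : Disjoint S T) {B C : Set (∀ i, X i)}
    (hB : MeasurableSet[cylinderEvents S] B) (hC : MeasurableSet[cylinderEvents T] C) :
    (Measure.infinitePi μ).real (B ∩ C) =
      (Measure.infinitePi μ).real B * (Measure.infinitePi μ).real C := by
  simp only [measureReal_def, ← ENNReal.toReal_mul,
    (Indep_iff _ _ _).1 (indep_cylinderEvents_infinitePi μ hST) B C hB hC]

theorem measurableSet_cylinderEvents_pi {S : Set ι} (hS : S.Countable) {t : ∀ i, Set (X i)}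
    (ht : ∀ i ∈ S, MeasurableSet (t i)) : MeasurableSet[cylinderEvents S] (S.pi t) := by
  rw [pi_def]
  exact .biInter hS fun i hi ↦ measurable_cylinderEvent_apply hi (ht i hi)

end CylinderEvents

section Separated

variable {G : Type*} [Group G]

theorem disjoint_mul_iff {D S T : Set G} :
    Disjoint (D * S) (D * T) ↔ Disjoint (D⁻¹ * D * S) T := by
  simp only [disjoint_left, mem_mul, mem_inv]
  constructor
  · rintro h _ ⟨_, ⟨d', hd', d, hd, rfl⟩, s, hs, rfl⟩ ht
    exact h ⟨d, hd, s, hs, rfl⟩ ⟨d'⁻¹, hd', _, ht, by group⟩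
  · rintro h _ ⟨d, hd, s, hs, rfl⟩ ⟨d', hd', t, ht, hdt⟩
    refine h ⟨d'⁻¹ * d, ⟨d'⁻¹, by simpa, d, hd, rfl⟩, s, hs, rfl⟩ ?_
    rwa [mul_assoc, ← hdt, inv_mul_cancel_left]

theorem DSeparated.eq_of_mul_eq {D S : Set G} (hS : DSeparated G D S) {d d' s s' : G}
    (hd : d ∈ D) (hd' : d' ∈ D) (hs : s ∈ S) (hs' : s' ∈ S) (h : d * s = d' * s') : s = s' := by
  by_contra hne
  exact disjoint_left.1 (hS s hs s' hs' hne) (mul_mem_mul hd rfl) (h ▸ mul_mem_mul hd' rfl)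

theorem exists_finset_dSeparated {R D : Set G} (hR : R.Infinite) (hD : D.Finite) (n : ℕ) :
    ∃ A : Finset G, ↑A ⊆ R ∧ #A = n ∧ DSeparated G D A := by
  classical
  let Apart (g h : G) : Prop := g ≠ h ∧ Disjoint (D * {g}) (D * {h})
  have : Std.Symm Apart := ⟨fun _ _ h ↦ ⟨h.1.symm, h.2.symm⟩⟩
  have hextend (F : Finset G) : ∃ r ∈ R, ∀ g ∈ F, Apart g r := by
    have hfin : (F ∪ D⁻¹ * D * F : Set G).Finite :=
      F.finite_toSet.union ((hD.inv.mul hD).mul F.finite_toSet)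
    obtain ⟨r, hr, hrF⟩ := (hR.sdiff hfin).nonempty
    refine ⟨r, hr, fun g hg ↦ ⟨fun h ↦ hrF (.inl (h ▸ hg)), ?_⟩⟩
    rw [disjoint_mul_iff, disjoint_singleton_right]
    exact fun h ↦ hrF (.inr (mul_subset_mul_left (by simpa using hg) h))
  obtain ⟨f, hfR, hf⟩ :=
    exists_seq_of_forall_finset_exists' (· ∈ R) Apart fun F _ ↦ hextend F
  have hinj : f.Injective := fun i j hij ↦ by_contra fun hne ↦ (hf hne).1 hij
  refine ⟨(Finset.range n).image f, ?_, ?_, ?_⟩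
  · simp [subset_def, hfR]
  · rw [Finset.card_image_of_injective _ hinj, Finset.card_range]
  · simp only [Finset.coe_image, DSeparated, forall_mem_image]
    exact fun i _ j _ hij ↦ (hf (ne_of_apply_ne f hij)).2

end Separated

section Shift

variable {G K : Type*} [Group G] [MeasurableSpace K]

theorem measurable_smul_cylinderEvents (D : Set G) (g : G) :
    Measurable[cylinderEvents (D * {g}), cylinderEvents D] (g • · : (G → K) → G → K) :=
  measurable_cylinderEvents_iff.2 fun _ hh ↦
    measurable_cylinderEvent_apply (mul_mem_mul hh rfl)

theorem measurableSet_cylinderEvents_biInter_smul_preimage {D : Set G} {C : Set (G → K)}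
    (hC : MeasurableSet[cylinderEvents D] C) (A : Finset G) :
    MeasurableSet[cylinderEvents (D * A : Set G)] (⋂ a ∈ A, (a • ·) ⁻¹' C) := by
  refine .biInter A.countable_toSet fun a ha ↦ ?_
  refine cylinderEvents_mono ?_ _ (measurable_smul_cylinderEvents D a hC)
  exact mul_subset_mul_left (singleton_subset_iff.2 ha)

/-- The Bernoulli measure `ν ^ G` on `K ^ G` for a probability measure `ν`: the coordinates are
independent with common law `ν`. For other `ν` the value is junk. -/
noncomputable abbrev iidMeasure (G : Type*) (ν : Measure K) : Measure (G → K) :=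
  Measure.infinitePi fun _ ↦ ν

variable {ν : Measure K} [IsProbabilityMeasure ν]

theorem measurePreserving_smul_iidMeasure (g : G) :
    MeasurePreserving (g • · : (G → K) → G → K) (iidMeasure G ν) (iidMeasure G ν) where
  measurable := measurable_pi_lambda _ fun h ↦ measurable_pi_apply (h * g)
  map_eq := by
    have hshift : (g • · : (G → K) → G → K) =
        MeasurableEquiv.piCongrLeft (fun _ ↦ K) (Equiv.mulRight g⁻¹) := by
      ext z h
      obtain ⟨k, rfl⟩ := (Equiv.mulRight g⁻¹).surjective h
      rw [MeasurableEquiv.coe_piCongrLeft, Equiv.piCongrLeft_apply_apply]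
      exact congrArg z (inv_mul_cancel_right k g)
    rw [hshift, Measure.infinitePi_map_piCongrLeft (fun _ ↦ ν)]

theorem measureReal_iidMeasure_smul_preimage {C : Set (G → K)} (hC : MeasurableSet C) (g : G) :
    (iidMeasure G ν).real ((g • ·) ⁻¹' C) = (iidMeasure G ν).real C :=
  (measurePreserving_smul_iidMeasure g).measureReal_preimage hC.nullMeasurableSet

theorem measureReal_iidMeasure_biInter_smul_preimage {D : Set G} {A : Finset G} {C : Set (G → K)}
    (hA : DSeparated G D A) (hC : MeasurableSet[cylinderEvents D] C) :
    (iidMeasure G ν).real (⋂ a ∈ A, (a • ·) ⁻¹' C) = (iidMeasure G ν).real C ^ #A := by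
  classical
  induction A using Finset.induction_on with
  | empty => simp
  | insert a A ha ih =>
    have hdisj : Disjoint (D * {a}) (D * A : Set G) := by
      rw [disjoint_mul_iff, disjoint_right]
      intro b hb
      rw [← disjoint_singleton_right, ← disjoint_mul_iff]
      exact hA a (by simp) b (by simp [Finset.mem_coe.1 hb]) fun h ↦ ha (h ▸ hb)
    have hA' : DSeparated G D A := fun g hg h hh ↦ hA g (by simp_all) h (by simp_all)
    rw [Finset.set_biInter_insert, Finset.card_insert_of_notMem ha, pow_succ',
      measureReal_inter_of_disjoint_cylinderEvents _ hdisj (measurable_smul_cylinderEvents D a hC)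
        (measurableSet_cylinderEvents_biInter_smul_preimage hC A),
      measureReal_iidMeasure_smul_preimage (cylinderEvents_le_pi _ hC), ih hA']

variable [TopologicalSpace K] [CompactSpace K]

theorem exists_forall_smul_notMem {D : Finset G} {B : Set (G → K)} (hBo : IsOpen B)
    (hB : MeasurableSet[cylinderEvents (D : Set G)] B)
    (hBD : 4 * (iidMeasure G ν).real B * (#D ^ 2 : ℕ) ≤ 1)
    (hB2 : 2 * (iidMeasure G ν).real B < 1) : ∃ z : G → K, ∀ g : G, g • z ∉ B := by
  classical
  have hmeas : MeasurableSet B := cylinderEvents_le_pi _ hB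
  have hcard (g : G) : #(D⁻¹ * D * {g}) ≤ #D ^ 2 := by
    rw [Finset.card_mul_singleton, sq]
    simpa using Finset.card_mul_le (s := D⁻¹) (t := D)
  have hindep (g : G) (T : Finset G) (hT : Disjoint T (D⁻¹ * D * {g})) :
      (iidMeasure G ν).real ((g • ·) ⁻¹' B ∩ ⋂ h ∈ T, ((h • ·) ⁻¹' B)ᶜ) ≤
        (iidMeasure G ν).real B *
          (iidMeasure G ν).real (⋂ h ∈ T, ((h • ·) ⁻¹' B)ᶜ) := by
    have hdisj : Disjoint (D * {g} : Set G) (D * T : Set G) := by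
      rw [disjoint_mul_iff]
      simpa only [← Finset.disjoint_coe, Finset.coe_mul, Finset.coe_inv, Finset.coe_singleton]
        using hT.symm
    rw [← measureReal_iidMeasure_smul_preimage hmeas g]
    exact (measureReal_inter_of_disjoint_cylinderEvents _ hdisj
      (measurable_smul_cylinderEvents _ g hB)
      (measurableSet_cylinderEvents_biInter_smul_preimage hB.compl T)).le
  have hclosed (g : G) : IsClosed ((g • ·) ⁻¹' B : Set (G → K))ᶜ :=
    (hBo.preimage (continuous_pi fun h ↦ continuous_apply (h * g))).isClosed_compl
  have hne : (⋂ g : G, ((g • ·) ⁻¹' B : Set (G → K))ᶜ).Nonempty :=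
    CompactSpace.iInter_nonempty hclosed fun T ↦ nonempty_of_measureReal_ne_zero <|
      ne_of_gt <| lovasz_local_lemma
        (fun g ↦ (measurePreserving_smul_iidMeasure (ν := ν) g).measurable hmeas)
        measureReal_nonneg hindep hcard hBD hB2 T
  exact hne.imp fun z ↦ mem_iInter.1

theorem exists_card_forall_exists_smul_mem {D : Finset G} {V : Set (G → K)} (hVc : IsClosed V)
    (hV : MeasurableSet[cylinderEvents (D : Set G)] V) (hpos : 0 < (iidMeasure G ν).real V) :
    ∃ N : ℕ, ∀ A : Finset G, #A = N → DSeparated G (D : Set G) A →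
      ∃ z : G → K, ∀ g : G, ∃ a ∈ A, (a * g) • z ∈ V := by
  classical
  set q := (iidMeasure G ν).real Vᶜ
  have hq : q < 1 := by
    simpa [q, probReal_compl_eq_one_sub (cylinderEvents_le_pi _ hV)] using hpos
  have hlim₂ : Tendsto (fun n : ℕ ↦ 4 * #D ^ 2 * (n ^ 2 * q ^ n)) atTop (𝓝 0) := by
    simpa only [mul_zero] using
      (tendsto_pow_const_mul_const_pow_of_lt_one 2 measureReal_nonneg hq).const_mul (4 * #D ^ 2 : ℝ)
  have hlim₁ : Tendsto (fun n : ℕ ↦ 2 * q ^ n) atTop (𝓝 0) := by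
    simpa only [mul_zero] using
      (tendsto_pow_atTop_nhds_zero_of_lt_one measureReal_nonneg hq).const_mul 2
  obtain ⟨N, hN₂, hN₁⟩ :=
    ((hlim₂.eventually_lt_const one_pos).and (hlim₁.eventually_lt_const one_pos)).exists
  refine ⟨N, fun A hAN hA ↦ ?_⟩
  set B : Set (G → K) := ⋂ a ∈ A, (a • ·) ⁻¹' Vᶜ
  have hBq : (iidMeasure G ν).real B = q ^ N := by
    rw [measureReal_iidMeasure_biInter_smul_preimage hA hV.compl, hAN]
  have hBo : IsOpen B := isOpen_biInter_finset fun a _ ↦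
    hVc.isOpen_compl.preimage (continuous_pi fun h ↦ continuous_apply (h * a))
  have hB : MeasurableSet[cylinderEvents ((D * A : Finset G) : Set G)] B := by
    rw [Finset.coe_mul]
    exact measurableSet_cylinderEvents_biInter_smul_preimage hV.compl A
  have hBD : 4 * (iidMeasure G ν).real B * (#(D * A) ^ 2 : ℕ) ≤ 1 := calc
    _ ≤ 4 * q ^ N * ((#D * N) ^ 2 : ℕ) := by
      rw [hBq, ← hAN]
      gcongr
      exact Finset.card_mul_le
    _ = 4 * #D ^ 2 * (N ^ 2 * q ^ N) := by
      push_cast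
      ring
    _ ≤ 1 := hN₂.le
  obtain ⟨z, hz⟩ := exists_forall_smul_notMem hBo hB hBD (by rwa [hBq])
  refine ⟨z, fun g ↦ ?_⟩
  simpa [B, mul_smul] using hz g

end Shift

section Isolated

variable {G : Type*} [Group G]

/-- The cylinder set of all `z ∈ 2 ^ G` that agree with the indicator function of the identity on
the window `D`. The translates of a configuration that lie in it mark the sites carrying an isolated
`true`, which form a separated set. -/
def isolatedOne (D : Set G) : Set (G → Bool) :=
  D.pi fun d ↦ {b | b = true ↔ d = 1}

theorem dSeparated_setOf_smul_mem_isolatedOne (D : Set G) (z : G → Bool) :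
    DSeparated G D {g | g • z ∈ isolatedOne (D⁻¹ * D)} := by
  intro g hg h hh hne
  rw [disjoint_mul_iff, disjoint_singleton_right]
  rintro ⟨e, he, _, rfl, rfl⟩
  have hone : 1 ∈ D⁻¹ * D := by
    obtain ⟨_, _, d, hd, _⟩ := he
    exact ⟨d⁻¹, inv_mem_inv.2 hd, d, hd, inv_mul_cancel d⟩
  have htrue : z (1 * (e * _)) = true := (hh 1 hone).2 rfl
  rw [one_mul] at htrue
  exact hne (by simp [(hg e he).1 htrue])

theorem exists_card_forall_exists_smul_mem_isolatedOne (D : Finset G) :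
    ∃ N : ℕ, ∀ A : Finset G, #A = N → DSeparated G (D : Set G) A →
      ∃ z : G → Bool, ∀ g : G, ∃ a ∈ A, (a * g) • z ∈ isolatedOne (D : Set G) := by
  let coin : Measure Bool := (PMF.uniformOfFintype Bool).toMeasure
  refine exists_card_forall_exists_smul_mem (ν := coin)
    (isClosed_set_pi fun _ _ ↦ isClosed_discrete _)
    (measurableSet_cylinderEvents_pi D.countable_toSet fun _ _ ↦ .of_discrete) ?_
  have hcoin (d : G) : coin {b | b = true ↔ d = 1} ≠ 0 := by
    by_cases hd : d = 1 <;> simp [coin, hd]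
  refine ENNReal.toReal_pos ?_ (measure_ne_top _ _)
  rw [isolatedOne, iidMeasure,
    Measure.infinitePi_pi (μ := fun _ ↦ coin) fun _ _ ↦ .of_discrete]
  exact Finset.prod_ne_zero_iff.2 fun d _ ↦ hcoin d

end Isolated

section Flow

variable {G X : Type*} [Group G] [TopologicalSpace X] [MulAction G X]

theorem infinite_setOf_smul_mem [Infinite G] [CompactSpace X] [ContinuousConstSMul G X]
    [MulAction.IsMinimal G X] {U : Set X} (hU : IsOpen U) (hUne : U.Nonempty) (x : X) :
    {g : G | g • x ∈ U}.Infinite := by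
  intro hfin
  obtain ⟨I, hI⟩ := isCompact_univ.exists_finite_cover_smul G hU hUne
  have hcover : (univ : Set G) ⊆ I * {g : G | g • x ∈ U} := by
    intro g _
    obtain ⟨f, hf, hfg⟩ := mem_iUnion₂.1 (hI (mem_univ (g • x)))
    rw [mem_smul_set_iff_inv_smul_mem, ← mul_smul] at hfg
    exact ⟨f, hf, f⁻¹ * g, hfg, mul_inv_cancel_left f g⟩
  exact infinite_univ ((I.finite_toSet.mul hfin).subset hcover)

theorem SCP.of_isMinimal [Infinite G] [CompactSpace X] [ContinuousConstSMul G X]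
    [MulAction.IsMinimal G X] : SCP G X := by
  classical
  intro D hD U hU hUne
  lift D to Finset G using hD
  obtain ⟨N, hN⟩ := exists_card_forall_exists_smul_mem_isolatedOne (D⁻¹ * D)
  obtain ⟨y, hy⟩ := hUne
  obtain ⟨A, hAU, hAN, hA⟩ := exists_finset_dSeparated
    (infinite_setOf_smul_mem hU ⟨y, hy⟩ y) (D⁻¹ * D).finite_toSet N
  obtain ⟨z, hz⟩ := hN A hAN hA
  push_cast at hz
  refine ⟨_, dSeparated_setOf_smul_mem_isolatedOne D z, fun x ↦ ?_⟩
  have hW : IsOpen (⋂ a ∈ A, (a • ·) ⁻¹' U) :=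
    isOpen_biInter_finset fun a _ ↦ hU.preimage (continuous_const_smul a)
  obtain ⟨g, hg⟩ := hW.exists_smul_mem G x ⟨y, mem_iInter₂.2 hAU⟩
  obtain ⟨a, ha, haz⟩ := hz g
  refine ⟨a * g, haz, ?_⟩
  rw [mul_smul]
  exact mem_iInter₂.1 hg a ha

theorem DSeparated.exists_forall_smul_eqOn {A : Type*} {D S : Set G} (hS : DSeparated G D S)
    (w : G → A) : ∃ z : G → A, ∀ s ∈ S, EqOn (s • z) w D := by
  let mulDS (p : D × S) : G := p.1 * p.2
  have hmulDS : Function.FactorsThrough (fun p : D × S ↦ w p.1) mulDS := by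
    rintro ⟨d, s⟩ ⟨d', s'⟩ h
    have hs : (s : G) = s' := hS.eq_of_mul_eq d.2 d'.2 s.2 s'.2 h
    exact congrArg w (mul_right_cancel (h.trans (by rw [hs])))
  exact ⟨Function.extend mulDS (fun p ↦ w p.1) w, fun s hs d hd ↦
    hmulDS.extend_apply w ⟨⟨d, hd⟩, ⟨s, hs⟩⟩⟩

theorem SCP.flowsDisjoint_shift (hX : SCP G X) (A : Type*) [TopologicalSpace A] :
    FlowsDisjoint G X (G → A) := by
  intro J hJ hJinv _ hJsnd
  rw [← hJ.closure_eq, eq_univ_iff_forall]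
  rintro ⟨x, w⟩
  refine mem_closure_iff.2 fun O hO hxw ↦ ?_
  obtain ⟨U, V, hU, hV, hxU, hwV, hUV⟩ := isOpen_prod_iff.1 hO x w hxw
  obtain ⟨D, u, hu, huV⟩ := isOpen_pi_iff.1 hV w hwV
  obtain ⟨S, hS, hSU⟩ := hX D D.finite_toSet U hU ⟨x, hxU⟩
  obtain ⟨z, hz⟩ := hS.exists_forall_smul_eqOn w
  obtain ⟨⟨x', z'⟩, hx'z, rfl⟩ := hJsnd.ge (mem_univ z)
  obtain ⟨s, hs, hsU⟩ := hSU x'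
  refine ⟨s • (x', z'), hUV ⟨hsU, huV fun d hd ↦ ?_⟩, hJinv s _ hx'z⟩
  change (s • z') d ∈ u d
  rw [hz s hs hd]
  exact (hu d hd).2

theorem bernoulli_disjoint_from_every_minimal_flow_general [Infinite G] [CompactSpace X]
    [ContinuousConstSMul G X] (A : Type*) [TopologicalSpace A] (hX : IsMinimalFlow G X) :
    FlowsDisjoint G X (G → A) :=
  have : MulAction.IsMinimal G X := ⟨hX⟩
  SCP.of_isMinimal.flowsDisjoint_shift A

end Flow

/-- Let `G` be an infinite discrete group. Then the Bernoulli flow `2^G`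
is disjoint from every minimal `G`-flow. -/
theorem bernoulli_disjoint_from_every_minimal_flow
    (G : Type*) [Group G] [Infinite G]
    (X : Type*) [TopologicalSpace X] [CompactSpace X] [T2Space X] [Nonempty X]
    [MulAction G X] [ContinuousConstSMul G X]
    (hXmin : IsMinimalFlow G X) :
    FlowsDisjoint G X (G → Bool) :=
  bernoulli_disjoint_from_every_minimal_flow_general Bool hXmin
end

section
/- Let G be an infinite discrete group. Then the closed subalgebra 𝔄(G) of ℓ∞(G) generated by the minimal functions is a proper subalgebra: 𝔄(G) ≠ ℓ∞(G). -/
open scoped ENNReal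

universe u

/-- A bounded function `φ : G → ℝ` is a minimal function if there are a minimal `G`-flow
`X` (a compact Hausdorff space with a `G`-action by homeomorphisms in which every orbit is
dense), a point `x₀ ∈ X` and a continuous `f : X → ℝ` with `φ g = f (g • x₀)` for all
`g`. -/
def IsMinimalFunction {G : Type u} [Group G] (φ : G → ℝ) : Prop :=
  ∃ (X : Type u) (_ : TopologicalSpace X) (_ : CompactSpace X) (_ : T2Space X)
    (_ : MulAction G X) (_ : ContinuousConstSMul G X),
    (∀ x : X, Dense (MulAction.orbit G x)) ∧
    ∃ (x₀ : X) (f : C(X, ℝ)), ∀ g : G, φ g = f (g • x₀)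

/-!
All elements of `𝔄(G)` are uniformly continuous for the coarsest uniform structure making the
minimal functions uniformly continuous, so it suffices to find a bounded function that is not.

Minimal flows have the separated covering property: for finite `D ⊆ G` and nonempty open `U`,
finitely many translates `s⁻¹ U` cover the flow, with the sets `D s` pairwise disjoint.
Otherwise the complement of a neighbourhood contains pieces of orbits along all `D`-separated sets.
That property passes to finite intersections, because a local lemma produces `D`-separated sets
hitting prescribed translates of a fixed finite set; but finitely many translates of the
neighbourhood cover the flow, so some finite intersection is empty.

Applying the covering property to one minimal function at a time, for any entourage one finds a
finite set `S` and small sets `C s`, `s ∈ S`, such that each `h` satisfies `s * h ∈ C s` for some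
`s ∈ S`. Let `ω ⊆ G` be a set whose right translates realize all finite patterns. If its indicator
were uniformly continuous, each `C s` would lie inside or outside `ω`; the pattern which contradicts
this choice at every `s ∈ S` is realized by some `h`, which is absurd.
-/

namespace MinimalFunctions

open Finset
open scoped Pointwise Topology Uniformity

section Counting

variable {α ι : Type*} [DecidableEq α]

/-- The subsets of `V` whose trace on every edge `e i ⊆ V` with `i ∈ I` avoids the forbidden traces
`bad i`.  Edges sticking out of `V` impose no condition. -/
def avoidingSubsets (I : Finset ι) (e : ι → Finset α) (bad : ι → Finset (Finset α))
    (V : Finset α) : Finset (Finset α) :=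
  {A ∈ V.powerset | ∀ i ∈ I, e i ⊆ V → A ∩ e i ∉ bad i}

variable {I : Finset ι} {e : ι → Finset α} {bad : ι → Finset (Finset α)} {V : Finset α} {v : α}

lemma mem_avoidingSubsets {A : Finset α} :
    A ∈ avoidingSubsets I e bad V ↔ A ⊆ V ∧ ∀ i ∈ I, e i ⊆ V → A ∩ e i ∉ bad i := by
  simp only [avoidingSubsets, mem_filter, mem_powerset]

lemma card_filter_erase_mem {𝒜 : Finset (Finset α)} (h𝒜 : 𝒜 ⊆ V.powerset) (hv : v ∉ V) :
    #{A ∈ (insert v V).powerset | A.erase v ∈ 𝒜} = 2 * #𝒜 := by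
  have notMem_of_mem : ∀ A ∈ 𝒜, v ∉ A := fun A hA hvA => hv (mem_powerset.1 (h𝒜 hA) hvA)
  have subset_insert_of_mem : ∀ A ∈ 𝒜, A ⊆ insert v V := fun A hA =>
    (mem_powerset.1 (h𝒜 hA)).trans (subset_insert v V)
  rw [← card_memberSubfamily_add_card_nonMemberSubfamily v, two_mul]
  congr 2 <;> ext A
  · simp only [mem_memberSubfamily, mem_filter, mem_powerset]
    refine ⟨fun ⟨⟨_, hA⟩, hvA⟩ => by rwa [erase_insert hvA] at hA, fun hA => ?_⟩
    have hvA := notMem_of_mem A hA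
    exact ⟨⟨insert_subset (mem_insert_self v V) (subset_insert_of_mem A hA),
      by rwa [erase_insert hvA]⟩, hvA⟩
  · simp only [mem_nonMemberSubfamily, mem_filter, mem_powerset]
    refine ⟨fun ⟨⟨_, hA⟩, hvA⟩ => by rwa [erase_eq_of_notMem hvA] at hA, fun hA => ?_⟩
    have hvA := notMem_of_mem A hA
    exact ⟨⟨subset_insert_of_mem A hA, by rwa [erase_eq_of_notMem hvA]⟩, hvA⟩

lemma exists_inter_mem_bad_of_erase_mem {A : Finset α} (hAV : A ⊆ insert v V)
    (hA : A.erase v ∈ avoidingSubsets I e bad V)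
    (hA' : A ∉ avoidingSubsets I e bad (insert v V)) :
    ∃ i ∈ I, v ∈ e i ∧ e i ⊆ insert v V ∧ A ∩ e i ∈ bad i := by
  obtain ⟨i, hi, hiV, hbad⟩ : ∃ i ∈ I, e i ⊆ insert v V ∧ A ∩ e i ∈ bad i := by
    simpa [mem_avoidingSubsets, hAV] using hA'
  refine ⟨i, hi, by_contra fun hvi => ?_, hiV, hbad⟩
  refine (mem_avoidingSubsets.1 hA).2 i hi ((subset_insert_iff_of_notMem hvi).1 hiV) ?_
  rwa [erase_inter, erase_eq_of_notMem fun h => hvi (mem_inter.1 h).2]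

lemma sdiff_mem_avoidingSubsets {A : Finset α} (hA : A ∈ avoidingSubsets I e bad V)
    (s : Finset α) : A \ s ∈ avoidingSubsets I e bad (V \ s) := by
  rw [mem_avoidingSubsets] at hA ⊢
  refine ⟨sdiff_subset_sdiff hA.1 subset_rfl, fun i hi hiV => ?_⟩
  have hdisj : Disjoint (e i) s := disjoint_of_subset_left hiV sdiff_disjoint
  have htrace : (A \ s) ∩ e i = A ∩ e i := by
    rw [sdiff_inter_right_comm, sdiff_eq_self_of_disjoint (hdisj.mono_left inter_subset_right)]
  exact htrace ▸ hA.2 i hi (hiV.trans sdiff_subset)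

lemma card_filter_inter_mem_bad_le {i : ι} (hvi : v ∈ e i) :
    #{A ∈ (insert v V).powerset | A.erase v ∈ avoidingSubsets I e bad V ∧ A ∩ e i ∈ bad i} ≤
      #(avoidingSubsets I e bad (V \ e i)) * #(bad i) := by
  rw [← card_product]
  refine card_le_card_of_injOn (fun A => (A \ e i, A ∩ e i)) (fun A hA => ?_)
    fun A _ B _ hAB => ?_
  · obtain ⟨-, hAgood, hAbad⟩ := mem_filter.1 hA
    have hsdiff : A.erase v \ e i = A \ e i := by
      rw [erase_sdiff_comm, erase_eq_of_notMem fun h => (mem_sdiff.1 h).2 hvi]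
    have hA := sdiff_mem_avoidingSubsets hAgood (e i)
    rw [hsdiff] at hA
    exact mem_product.2 ⟨hA, hAbad⟩
  · obtain ⟨hsdiff, hinter⟩ := Prod.mk.inj hAB
    rw [← sdiff_union_inter A (e i), hsdiff, hinter, sdiff_union_inter]

lemma two_mul_card_avoidingSubsets_le (hv : v ∉ V) :
    2 * #(avoidingSubsets I e bad V) ≤ #(avoidingSubsets I e bad (insert v V)) +
      ∑ i ∈ I with v ∈ e i ∧ e i ⊆ insert v V, #(avoidingSubsets I e bad (V \ e i)) * #(bad i) := by
  have hcard : #{A ∈ (insert v V).powerset | A.erase v ∈ avoidingSubsets I e bad V} =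
      2 * #(avoidingSubsets I e bad V) :=
    card_filter_erase_mem (filter_subset _ _) hv
  rw [← hcard]
  let violating (i : ι) : Finset (Finset α) :=
    {A ∈ (insert v V).powerset | A.erase v ∈ avoidingSubsets I e bad V ∧ A ∩ e i ∈ bad i}
  have hcover : {A ∈ (insert v V).powerset | A.erase v ∈ avoidingSubsets I e bad V} ⊆
      avoidingSubsets I e bad (insert v V) ∪
        {i ∈ I | v ∈ e i ∧ e i ⊆ insert v V}.biUnion violating := by
    intro A hA
    rw [mem_filter] at hA
    refine mem_union.2 (or_iff_not_imp_left.2 fun hA' => ?_)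
    obtain ⟨i, hi, hvi, hiV, hbad⟩ :=
      exists_inter_mem_bad_of_erase_mem (mem_powerset.1 hA.1) hA.2 hA'
    exact mem_biUnion.2 ⟨i, mem_filter.2 ⟨hi, hvi, hiV⟩, mem_filter.2 ⟨hA.1, hA.2, hbad⟩⟩
  refine (card_le_card hcover).trans <| (card_union_le _ _).trans <| Nat.add_le_add_left ?_ _
  exact card_biUnion_le.trans <| sum_le_sum fun i hi =>
    card_filter_inter_mem_bad_le (mem_filter.1 hi).2.1

lemma mul_card_avoidingSubsets_le {β : ℝ} (hβ : 0 < β)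
    (hsum : ∑ i ∈ I with v ∈ e i, (#(bad i) : ℝ) / β ^ (#(e i) - 1) ≤ 2 - β) (hv : v ∉ V)
    (hV : ∀ U ⊆ V, #(avoidingSubsets I e bad (V \ U)) * β ^ #U ≤ #(avoidingSubsets I e bad V)) :
    β * #(avoidingSubsets I e bad V) ≤ #(avoidingSubsets I e bad (insert v V)) := by
  set N : ℝ := (#(avoidingSubsets I e bad V) : ℝ)
  have card_sdiff_le : ∀ i, v ∈ e i → e i ⊆ insert v V →
      (#(avoidingSubsets I e bad (V \ e i)) : ℝ) ≤ N / β ^ (#(e i) - 1) := by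
    intro i hvi hiV
    have := hV ((e i).erase v) (subset_insert_iff.1 hiV)
    rwa [← sdiff_insert_of_notMem hv, insert_erase hvi, card_erase_of_mem hvi,
      ← le_div_iff₀ (by positivity)] at this
  have hloss : ∑ i ∈ I with v ∈ e i ∧ e i ⊆ insert v V,
      (#(avoidingSubsets I e bad (V \ e i)) : ℝ) * #(bad i) ≤ N * (2 - β) := calc
    _ ≤ ∑ i ∈ I with v ∈ e i ∧ e i ⊆ insert v V, N / β ^ (#(e i) - 1) * #(bad i) := by
      refine sum_le_sum fun i hi => ?_
      obtain ⟨-, hvi, hiV⟩ := mem_filter.1 hi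
      gcongr
      exact card_sdiff_le i hvi hiV
    _ ≤ ∑ i ∈ I with v ∈ e i, N / β ^ (#(e i) - 1) * #(bad i) :=
      sum_le_sum_of_subset_of_nonneg (monotone_filter_right I fun _ _ h => h.1)
        fun _ _ _ => by positivity
    _ = N * ∑ i ∈ I with v ∈ e i, (#(bad i) : ℝ) / β ^ (#(e i) - 1) := by
      rw [mul_sum]
      exact sum_congr rfl fun _ _ => by ring
    _ ≤ N * (2 - β) := by gcongr
  have hstep : 2 * (#(avoidingSubsets I e bad V) : ℝ) ≤ #(avoidingSubsets I e bad (insert v V)) +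
      ∑ i ∈ I with v ∈ e i ∧ e i ⊆ insert v V,
        (#(avoidingSubsets I e bad (V \ e i)) : ℝ) * #(bad i) := by
    exact_mod_cast two_mul_card_avoidingSubsets_le hv
  linarith

lemma card_avoidingSubsets_sdiff_mul_pow_le {β : ℝ} (hβ : 0 < β)
    (hsum : ∀ v, ∑ i ∈ I with v ∈ e i, (#(bad i) : ℝ) / β ^ (#(e i) - 1) ≤ 2 - β)
    (V : Finset α) :
    ∀ U ⊆ V, #(avoidingSubsets I e bad (V \ U)) * β ^ #U ≤ #(avoidingSubsets I e bad V) := by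
  induction V using Finset.strongInduction with
  | H V ih =>
    intro U hU
    obtain rfl | ⟨v, hvU⟩ := U.eq_empty_or_nonempty
    · simp
    have hvV := hU hvU
    have ih' := ih _ (erase_ssubset hvV)
    have hsdiff : V \ U = V.erase v \ U.erase v := by
      rw [← sdiff_insert_of_notMem (notMem_erase v V), insert_erase hvU, erase_sdiff_comm,
        erase_eq_of_notMem fun h => (mem_sdiff.1 h).2 hvU]
    calc (#(avoidingSubsets I e bad (V \ U)) : ℝ) * β ^ #U
        = #(avoidingSubsets I e bad (V.erase v \ U.erase v)) * β ^ #(U.erase v) * β := by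
          rw [hsdiff, ← card_erase_add_one hvU, pow_succ, mul_assoc]
      _ ≤ #(avoidingSubsets I e bad (V.erase v)) * β := by
          gcongr
          exact ih' _ (erase_subset_erase v hU)
      _ = β * #(avoidingSubsets I e bad (V.erase v)) := mul_comm _ _
      _ ≤ #(avoidingSubsets I e bad (insert v (V.erase v))) :=
          mul_card_avoidingSubsets_le hβ (hsum v) (notMem_erase v V) ih'
      _ = #(avoidingSubsets I e bad V) := by rw [insert_erase hvV]

/-- A local lemma proved by Rosenfeld's counting argument: adding a point to `V` multiplies the
number of avoiding subsets by at least `β`. -/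
theorem exists_forall_inter_notMem_bad (I : Finset ι) (e : ι → Finset α)
    (bad : ι → Finset (Finset α)) (he : ∀ i ∈ I, (e i).Nonempty) {β : ℝ} (hβ : 0 < β)
    (hsum : ∀ v, ∑ i ∈ I with v ∈ e i, (#(bad i) : ℝ) / β ^ (#(e i) - 1) ≤ 2 - β) :
    ∃ A : Finset α, ∀ i ∈ I, A ∩ e i ∉ bad i := by
  let V := I.biUnion e
  have hempty : ∅ ∈ avoidingSubsets I e bad (V \ V) :=
    mem_avoidingSubsets.2 ⟨empty_subset _, fun i hi hiV =>
      absurd (by simpa using hiV) (he i hi).ne_empty⟩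
  have hpos : (0 : ℝ) < #(avoidingSubsets I e bad V) := calc
    0 < #(avoidingSubsets I e bad (V \ V)) * β ^ #V :=
      mul_pos (Nat.cast_pos.2 (card_pos.2 ⟨∅, hempty⟩)) (pow_pos hβ _)
    _ ≤ #(avoidingSubsets I e bad V) :=
      card_avoidingSubsets_sdiff_mul_pow_le hβ hsum V V subset_rfl
  obtain ⟨A, hA⟩ := card_pos.1 (Nat.cast_pos.1 hpos)
  exact ⟨A, fun i hi => (mem_avoidingSubsets.1 hA).2 i hi (subset_biUnion_of_mem e hi)⟩

end Counting

open Filter in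
-- For `β` close to `2` the ratio `(2 ^ s - 1) / β ^ s` is below `1`, so its `r`-th power beats the
-- linear factor `s * r`.
lemma exists_local_lemma_parameters {s : ℕ} (hs : 0 < s) :
    ∃ (β : ℝ) (r : ℕ), 0 < β ∧ 0 < r ∧
      (s * r) * ((2 ^ s - 1) ^ r / β ^ (s * r - 1)) ≤ 2 - β := by
  obtain ⟨β, hβ, hβ0, hβ2⟩ : ∃ β : ℝ, 2 ^ s - 1 < β ^ s ∧ 0 < β ∧ β < 2 := by
    have hpow : Tendsto (fun x : ℝ => x ^ s) (𝓝[<] 2) (𝓝 (2 ^ s)) :=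
      ((continuous_pow s).tendsto 2).mono_left nhdsWithin_le_nhds
    exact ((hpow.eventually (lt_mem_nhds (sub_one_lt _))).and
      (Ioo_mem_nhdsLT zero_lt_two)).exists
  let q : ℝ := (2 ^ s - 1) / β ^ s
  have hq0 : 0 ≤ q := div_nonneg (sub_nonneg.2 (one_le_pow₀ one_le_two)) (by positivity)
  have hq1 : q < 1 := (div_lt_one (by positivity)).2 hβ
  have hlim : Tendsto (fun r : ℕ => s * β * (r * q ^ r)) atTop (𝓝 0) := by
    simpa using (tendsto_self_mul_const_pow_of_lt_one hq0 hq1).const_mul (s * β)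
  obtain ⟨r, hr, hr0⟩ :=
    ((hlim.eventually (gt_mem_nhds (sub_pos.2 hβ2))).and (eventually_gt_atTop 0)).exists
  refine ⟨β, r, hβ0, hr0, le_of_eq_of_le ?_ hr.le⟩
  have hβpow : β ^ (s * r) = β ^ (s * r - 1) * β := (pow_sub_one_mul (by positivity) β).symm
  rw [div_pow, ← pow_mul, hβpow]
  field_simp

section Separated

/-- `S` is `D`-separated: the translates `D * s`, for `s ∈ S`, are pairwise disjoint. -/
def IsSeparated {G : Type*} [Mul G] (D S : Finset G) : Prop :=
  ∀ s ∈ S, ∀ t ∈ S, ∀ d ∈ D, ∀ d' ∈ D, d * s = d' * t → s = t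

lemma IsSeparated.mono_left {G : Type*} [Mul G] {D D' S : Finset G} (hDD' : D ⊆ D')
    (hS : IsSeparated D' S) : IsSeparated D S :=
  fun s hs t ht d hd d' hd' => hS s hs t ht d (hDD' hd) d' (hDD' hd')

lemma isSeparated_singleton {G : Type*} [Mul G] (D : Finset G) (g : G) : IsSeparated D {g} :=
  fun _ hs _ ht _ _ _ _ _ => (mem_singleton.1 hs).trans (mem_singleton.1 ht).symm

lemma IsSeparated.mul {G : Type*} [Semigroup G] [IsRightCancelMul G] [DecidableEq G]
    {D S T : Finset G} (hS : IsSeparated D S) (hT : IsSeparated (D * S) T) :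
    IsSeparated D (S * T) := by
  intro a ha b hb d hd d' hd' h
  obtain ⟨s, hs, t, ht, rfl⟩ := mem_mul.1 ha
  obtain ⟨s', hs', t', ht', rfl⟩ := mem_mul.1 hb
  rw [← mul_assoc, ← mul_assoc] at h
  obtain rfl : t = t' := hT t ht t' ht' _ (mul_mem_mul hd hs) _ (mul_mem_mul hd' hs') h
  rw [hS s hs s' hs' d hd d' hd' (mul_right_cancel h)]

lemma IsSeparated.card_mul {G : Type*} [Mul G] [IsRightCancelMul G] [DecidableEq G]
    {D S : Finset G} (hS : IsSeparated D S) : #(D * S) = #D * #S := by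
  refine card_mul_iff.2 fun p hp q hq (h : p.1 * p.2 = q.1 * q.2) => ?_
  have hsnd : p.2 = q.2 := hS _ hp.2 _ hq.2 _ hp.1 _ hq.1 h
  exact Prod.ext (mul_right_cancel (hsnd ▸ h)) hsnd

variable {G : Type*} [Group G]

lemma exists_card_eq_and_isSeparated [Infinite G] (D : Finset G) (n : ℕ) :
    ∃ S : Finset G, #S = n ∧ IsSeparated D S := by
  classical
  induction n with
  | zero => exact ⟨∅, rfl, by simp [IsSeparated]⟩
  | succ n ih =>
    obtain ⟨S, hSn, hS⟩ := ih
    obtain ⟨g, hg⟩ := Infinite.exists_notMem_finset (S ∪ D⁻¹ * (D * S))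
    rw [notMem_union] at hg
    have hnew : ∀ s ∈ S, ∀ d ∈ D, ∀ d' ∈ D, d * g ≠ d' * s := fun s hs d hd d' hd' h =>
      hg.2 (mem_mul.2 ⟨d⁻¹, inv_mem_inv hd, d' * s, mul_mem_mul hd' hs, by simp [← h]⟩)
    refine ⟨insert g S, by rw [card_insert_of_notMem hg.1, hSn], fun s hs t ht d hd d' hd' h => ?_⟩
    obtain rfl | hsS := mem_insert.1 hs <;> obtain rfl | htS := mem_insert.1 ht
    · rfl
    · exact absurd h (hnew t htS d hd d' hd')
    · exact absurd h.symm (hnew s hsS d' hd' d hd)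
    · exact hS s hsS t htS d hd d' hd' h

section IsolatedPoints

variable [DecidableEq G]

/-- The points of `A` that are isolated in the Cayley graph of `E`: no other translate of `g` by
an element of `E` lies in `A`. -/
def isolatedPoints (E A : Finset G) : Finset G :=
  {g ∈ A | ∀ x ∈ E, x * g ∈ A → x = 1}

lemma mem_isolatedPoints {E A : Finset G} {g : G} :
    g ∈ isolatedPoints E A ↔ g ∈ A ∧ ∀ x ∈ E, x * g ∈ A → x = 1 :=
  mem_filter

lemma isSeparated_isolatedPoints {D E : Finset G} (hDE : D⁻¹ * D ⊆ E) (A : Finset G) :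
    IsSeparated D (isolatedPoints E A) := by
  intro s hs t ht d hd d' hd' h
  have htA : d'⁻¹ * d * s ∈ A := by
    rw [mul_assoc, h, inv_mul_cancel_left]
    exact (mem_isolatedPoints.1 ht).1
  have hone := (mem_isolatedPoints.1 hs).2 _ (hDE (mul_mem_mul (inv_mem_inv hd') hd)) htA
  rw [← inv_mul_eq_one.1 hone] at h
  exact mul_left_cancel h

lemma disjoint_isolatedPoints_inter_mul {E A K : Finset G}
    (h : Disjoint K (isolatedPoints E A)) : Disjoint K (isolatedPoints E (A ∩ (E * K))) := by
  refine disjoint_left.2 fun k hkK hk => disjoint_left.1 h hkK ?_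
  rw [mem_isolatedPoints, mem_inter] at hk
  exact mem_isolatedPoints.2 ⟨hk.1.1, fun x hx hxA =>
    hk.2 x hx (mem_inter.2 ⟨hxA, mul_mem_mul hx hkK⟩)⟩

-- Such a `B` is determined by its traces `{x ∈ E | x * k ∈ B}`, none of which is `{1}`.
lemma card_disjoint_isolatedPoints_le {E : Finset G} (hE : 1 ∈ E) (K : Finset G) :
    #{B ∈ (E * K).powerset | Disjoint K (isolatedPoints E B)} ≤ (2 ^ #E - 1) ^ #K := by
  have hcard : #(Fintype.piFinset fun _ : K => E.powerset.erase {1}) = (2 ^ #E - 1) ^ #K := by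
    rw [Fintype.card_piFinset, prod_const, card_erase_of_mem (by simpa using hE), card_powerset,
      card_univ, Fintype.card_coe]
  rw [← hcard]
  refine card_le_card_of_injOn (fun B k => {x ∈ E | x * k ∈ B}) (fun B hB => ?_)
    fun B hB C hC hBC => ?_
  · refine Fintype.mem_piFinset.2 fun k => mem_erase.2
      ⟨fun htrace => disjoint_left.1 (mem_filter.1 hB).2 k.2 ?_, by simp⟩
    have hmem : ∀ x, x ∈ E ∧ x * k ∈ B ↔ x = 1 := by simpa [Finset.ext_iff] using htrace
    exact mem_isolatedPoints.2
      ⟨by simpa using ((hmem 1).2 rfl).2, fun x hx hxB => (hmem x).1 ⟨hx, hxB⟩⟩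
  · have hiff : ∀ x ∈ E, ∀ k ∈ K, (x * k ∈ B ↔ x * k ∈ C) := fun x hx k hk => by
      simpa [hx] using Finset.ext_iff.1 (congrFun hBC ⟨k, hk⟩) x
    rw [← inter_eq_right.2 (mem_powerset.1 (mem_filter.1 hB).1),
      ← inter_eq_right.2 (mem_powerset.1 (mem_filter.1 hC).1)]
    ext g
    simp only [mem_inter, and_congr_right_iff]
    intro hg
    obtain ⟨x, hx, k, hk, rfl⟩ := mem_mul.1 hg
    exact hiff x hx k hk

lemma card_filter_mem_mul_singleton_le (P L : Finset G) (v : G) :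
    #{l ∈ L | v ∈ P * {l}} ≤ #P := calc
  #{l ∈ L | v ∈ P * {l}} ≤ #(P⁻¹ * {v}) := by
    refine card_le_card fun l hl => ?_
    obtain ⟨p, hp, l', hl', rfl⟩ := mem_mul.1 (mem_filter.1 hl).2
    rw [mem_singleton.1 hl']
    exact mem_mul.2 ⟨p⁻¹, inv_mem_inv hp, p * l, mem_singleton_self _, inv_mul_cancel_left p l⟩
  _ = #P := by rw [card_mul_singleton, card_inv]

lemma exists_forall_not_disjoint_isolatedPoints {E H : Finset G} (hE : 1 ∈ E) (hH : H.Nonempty)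
    (hEH : IsSeparated E H) {β : ℝ} (hβ : 0 < β)
    (hβ' : (#E * #H) * ((2 ^ #E - 1) ^ #H / β ^ (#E * #H - 1)) ≤ 2 - β) (L : Finset G) :
    ∃ A : Finset G, ∀ l ∈ L, ¬ Disjoint (H * {l}) (isolatedPoints E A) := by
  let bad (l : G) : Finset (Finset G) :=
    {B ∈ (E * (H * {l})).powerset | Disjoint (H * {l}) (isolatedPoints E B)}
  have card_edge (l : G) : #(E * (H * {l})) = #E * #H := by
    rw [← mul_assoc, card_mul_singleton, hEH.card_mul]
  have card_bad_le (l : G) : (#(bad l) : ℝ) ≤ (2 ^ #E - 1) ^ #H := by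
    have := card_disjoint_isolatedPoints_le hE (H * {l})
    rw [card_mul_singleton] at this
    calc (#(bad l) : ℝ) ≤ ((2 ^ #E - 1) ^ #H : ℕ) := Nat.cast_le.2 this
      _ = (2 ^ #E - 1) ^ #H := by push_cast [Nat.one_le_two_pow]; rfl
  have degree_le (v : G) : #{l ∈ L | v ∈ E * (H * {l})} ≤ #E * #H := by
    simpa only [mul_assoc, hEH.card_mul] using card_filter_mem_mul_singleton_le (E * H) L v
  obtain ⟨A, hA⟩ := exists_forall_inter_notMem_bad L (fun l => E * (H * {l})) bad
    (fun l _ => Nonempty.mul ⟨1, hE⟩ (hH.mul (singleton_nonempty l))) hβ fun v => calc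
      ∑ l ∈ L with v ∈ E * (H * {l}), (#(bad l) : ℝ) / β ^ (#(E * (H * {l})) - 1)
        ≤ ∑ l ∈ L with v ∈ E * (H * {l}), (2 ^ #E - 1) ^ #H / β ^ (#E * #H - 1) := by
          refine sum_le_sum fun l _ => ?_
          rw [card_edge]
          gcongr
          exact card_bad_le l
      _ ≤ (#E * #H : ℕ) * ((2 ^ #E - 1) ^ #H / β ^ (#E * #H - 1)) := by
          rw [sum_const, nsmul_eq_mul]
          gcongr
          · have : (1 : ℝ) ≤ 2 ^ #E := one_le_pow₀ one_le_two
            have : (0 : ℝ) ≤ 2 ^ #E - 1 := sub_nonneg.2 this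
            positivity
          · exact degree_le v
      _ ≤ 2 - β := by exact_mod_cast hβ'
  exact ⟨A, fun l hl hdisj => hA l hl <| mem_filter.2
    ⟨mem_powerset.2 inter_subset_right, disjoint_isolatedPoints_inter_mul hdisj⟩⟩

end IsolatedPoints

theorem exists_isSeparated_hitting [Infinite G] (D : Finset G) :
    ∃ H : Finset G, IsSeparated D H ∧ ∀ L : Finset G, ∃ T : Finset G, IsSeparated D T ∧
      ∀ l ∈ L, ∃ h ∈ H, h * l ∈ T := by
  classical
  let E : Finset G := insert 1 (D ∪ D⁻¹ * D)
  have hE : 1 ∈ E := mem_insert_self _ _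
  have hDE : D ⊆ E := subset_union_left.trans (subset_insert _ _)
  have hDDE : D⁻¹ * D ⊆ E := subset_union_right.trans (subset_insert _ _)
  obtain ⟨β, r, hβ, hr, hβr⟩ := exists_local_lemma_parameters (card_pos.2 ⟨1, hE⟩)
  obtain ⟨H, rfl, hEH⟩ := exists_card_eq_and_isSeparated E r
  refine ⟨H, hEH.mono_left hDE, fun L => ?_⟩
  obtain ⟨A, hA⟩ :=
    exists_forall_not_disjoint_isolatedPoints hE (card_pos.1 hr) hEH hβ hβr L
  refine ⟨isolatedPoints E A, isSeparated_isolatedPoints hDDE A, fun l hl => ?_⟩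
  obtain ⟨k, hk, hkA⟩ := not_disjoint_iff.1 (hA l hl)
  obtain ⟨h, hh, l', hl', rfl⟩ := mem_mul.1 hk
  exact ⟨h, hh, mem_singleton.1 hl' ▸ hkA⟩

end Separated

section MinimalFlows

variable {G X : Type*} [Group G] [MulAction G X]

/-- Every `D`-separated finite set can be moved into `W` along some orbit.  The separated covering
property says that complements of nonempty open sets in minimal flows do not have this property. -/
def ContainsSeparatedOrbits (D : Finset G) (W : Set X) : Prop :=
  ∀ S : Finset G, IsSeparated D S → ∃ x : X, ∀ s ∈ S, s • x ∈ W

lemma ContainsSeparatedOrbits.nonempty {D : Finset G} {W : Set X}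
    (hW : ContainsSeparatedOrbits D W) : W.Nonempty :=
  have ⟨_, hx⟩ := hW {1} (isSeparated_singleton D 1)
  ⟨_, hx 1 (mem_singleton_self 1)⟩

lemma ContainsSeparatedOrbits.preimage_smul [DecidableEq G] {D : Finset G} {W : Set X}
    (hW : ContainsSeparatedOrbits D W) (g : G) :
    ContainsSeparatedOrbits (D * {g}) ((g • ·) ⁻¹' W) := by
  intro S hS
  obtain ⟨x, hx⟩ := hW ({g} * S) ((isSeparated_singleton D g).mul hS)
  exact ⟨x, fun s hs => by simpa [mul_smul] using hx _ (mul_mem_mul (mem_singleton_self g) hs)⟩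

lemma ContainsSeparatedOrbits.mono_left {D D' : Finset G} {W : Set X} (hDD' : D ⊆ D')
    (hW : ContainsSeparatedOrbits D W) : ContainsSeparatedOrbits D' W :=
  fun S hS => hW S (hS.mono_left hDD')

variable [TopologicalSpace X] [CompactSpace X] [ContinuousConstSMul G X]
  [MulAction.IsMinimal G X]

lemma exists_finset_forall_smul_mem {U : Set X} (hUo : IsOpen U) (hU : U.Nonempty) :
    ∃ L : Finset G, ∀ x : X, ∃ l ∈ L, l • x ∈ U := by
  obtain ⟨L, hL⟩ := isCompact_univ.elim_finite_subcover (fun g : G => (g • ·) ⁻¹' U)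
    (fun g => hUo.preimage (continuous_const_smul g)) (hUo.iUnion_preimage_smul G hU).ge
  exact ⟨L, fun x => by simpa using hL (Set.mem_univ x)⟩

-- Along `S * T` the orbit of a point `x₂` stays in `W₂`.  Its visits to the open set `V` of points
-- whose orbit along `S * H` stays in `W₁` are syndetic, so `T` can be chosen to contain a product
-- of an element of `H` and a visit time.
lemma ContainsSeparatedOrbits.inter [Infinite G] {D : Finset G} {W₁ W₂ : Set X}
    (hW₁ : IsOpen W₁) (h₁ : ContainsSeparatedOrbits D W₁) (h₂ : ContainsSeparatedOrbits D W₂) :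
    ContainsSeparatedOrbits D (W₁ ∩ W₂) := by
  classical
  intro S hS
  obtain ⟨H, hH, hhit⟩ := exists_isSeparated_hitting (D * S)
  obtain ⟨x₁, hx₁⟩ := h₁ (S * H) (hS.mul hH)
  let V : Set X := ⋂ g ∈ S * H, (g • ·) ⁻¹' W₁
  have hV : IsOpen V :=
    isOpen_biInter_finset fun g _ => hW₁.preimage (continuous_const_smul g)
  obtain ⟨L, hL⟩ := exists_finset_forall_smul_mem (G := G) hV ⟨x₁, Set.mem_iInter₂.2 hx₁⟩
  obtain ⟨T, hT, hLT⟩ := hhit L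
  obtain ⟨x₂, hx₂⟩ := h₂ (S * T) (hS.mul hT)
  obtain ⟨l, hl, hlV⟩ := hL x₂
  obtain ⟨h, hh, hhl⟩ := hLT l hl
  refine ⟨(h * l) • x₂, fun s hs => ⟨?_, ?_⟩⟩
  · rw [← mul_smul, ← mul_assoc, mul_smul]
    exact Set.mem_iInter₂.1 hlV _ (mul_mem_mul hs hh)
  · rw [← mul_smul]
    exact hx₂ _ (mul_mem_mul hs hhl)

lemma ContainsSeparatedOrbits.biInter [Nonempty X] [Infinite G] {ι : Type*} {D : Finset G}
    {W : ι → Set X} {K : Finset ι} (hW : ∀ k ∈ K, IsOpen (W k))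
    (h : ∀ k ∈ K, ContainsSeparatedOrbits D (W k)) :
    ContainsSeparatedOrbits D (⋂ k ∈ K, W k) := by
  classical
  induction K using Finset.induction_on with
  | empty => exact fun S _ => ⟨Classical.arbitrary X, by simp⟩
  | insert k K _ ih =>
    rw [set_biInter_insert]
    rw [forall_mem_insert] at hW h
    exact h.1.inter hW.1 (ih hW.2 h.2)

/-- The *separated covering property* of minimal flows (Glasner–Tsankov–Weiss–Zucker). -/
theorem exists_isSeparated_forall_smul_mem [RegularSpace X] [Infinite G] (D : Finset G)
    {U : Set X} (hUo : IsOpen U) (hU : U.Nonempty) :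
    ∃ S : Finset G, IsSeparated D S ∧ ∀ x : X, ∃ s ∈ S, s • x ∈ U := by
  classical
  by_contra! hcon
  obtain ⟨y, hy⟩ := hU
  have : Nonempty X := ⟨y⟩
  obtain ⟨C, hCy, hC, hCU⟩ := exists_mem_nhds_isClosed_subset (hUo.mem_nhds hy)
  have hCc : ContainsSeparatedOrbits D Cᶜ := fun S hS =>
    (hcon S hS).imp fun _ hx s hs hsC => hx s hs (hCU hsC)
  obtain ⟨K, hK⟩ := exists_finset_forall_smul_mem (G := G) isOpen_interior
    ⟨y, mem_interior_iff_mem_nhds.2 hCy⟩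
  have hinter : ContainsSeparatedOrbits (D * K) (⋂ k ∈ K, (k • ·) ⁻¹' Cᶜ) :=
    .biInter (fun k _ => hC.isOpen_compl.preimage (continuous_const_smul k)) fun k hk =>
      (hCc.preimage_smul k).mono_left (mul_subset_mul_left (singleton_subset_iff.2 hk))
  obtain ⟨x, hx⟩ := hinter.nonempty
  obtain ⟨k, hk, hkC⟩ := hK x
  exact Set.mem_iInter₂.1 hx k hk (interior_subset hkC)

end MinimalFlows

section MinimalUniformity

lemma exists_isSeparated_forall_dist_lt {G : Type u} [Group G] [Infinite G] {φ : G → ℝ}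
    (hφ : IsMinimalFunction φ) (S : Finset G) {ε : ℝ} (hε : 0 < ε) :
    ∃ T : Finset G, IsSeparated S T ∧
      ∀ h : G, ∃ t ∈ T, ∀ s ∈ S, dist (φ (s * (t * h))) (φ s) < ε := by
  obtain ⟨X, _, _, _, _, _, hdense, x₀, f, hf⟩ := hφ
  have : MulAction.IsMinimal G X := ⟨hdense⟩
  let U : Set X := ⋂ s ∈ S, {x | dist (f (s • x)) (f (s • x₀)) < ε}
  have hUo : IsOpen U := isOpen_biInter_finset fun s _ =>
    isOpen_lt ((f.continuous.comp (continuous_const_smul s)).dist continuous_const)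
      continuous_const
  obtain ⟨T, hT, hTU⟩ := exists_isSeparated_forall_smul_mem S hUo
    ⟨x₀, Set.mem_iInter₂.2 fun s _ => by simpa using hε⟩
  refine ⟨T, hT, fun h => ?_⟩
  obtain ⟨t, ht, htU⟩ := hTU (h • x₀)
  refine ⟨t, ht, fun s hs => ?_⟩
  simpa [hf, mul_smul] using Set.mem_iInter₂.1 htU s hs

/-- The coarsest uniform structure on `G` making all minimal functions uniformly continuous. -/
abbrev minimalUniformSpace (G : Type u) [Group G] : UniformSpace G :=
  ⨅ φ : {φ : G → ℝ // IsMinimalFunction φ}, .comap φ.1 inferInstance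

lemma uniformContinuous_minimalUniformSpace {G : Type u} [Group G] {φ : G → ℝ}
    (hφ : IsMinimalFunction φ) : @UniformContinuous _ _ (minimalUniformSpace G) _ φ :=
  uniformContinuous_iInf_dom (i := ⟨φ, hφ⟩) uniformContinuous_comap

/-- There are finitely many `U`-small sets `C s`, each attached to a group element `s`, such that
every `h` has some translate `s * h` falling into the set attached to `s`. -/
def CapturesTranslates {G : Type*} [Mul G] (U : Set (G × G)) : Prop :=
  ∃ (S : Finset G) (C : G → Set G), (∀ s ∈ S, C s ×ˢ C s ⊆ U) ∧ ∀ h, ∃ s ∈ S, s * h ∈ C s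

lemma capturesTranslates_univ {G : Type*} [MulOneClass G] :
    CapturesTranslates (Set.univ : Set (G × G)) :=
  ⟨{1}, fun _ => Set.univ, by simp, by simp⟩

variable {G : Type u} [Group G] [Infinite G]

-- Since `T` is `S`-separated, `s` can be recovered from `s * t`, so `C s` and the target value
-- `φ s` can be attached to `s * t`.
lemma CapturesTranslates.inter_dist_lt {U : Set (G × G)} (hU : CapturesTranslates U) {φ : G → ℝ}
    (hφ : IsMinimalFunction φ) {ε : ℝ} (hε : 0 < ε) :
    CapturesTranslates ({p | dist (φ p.1) (φ p.2) < ε} ∩ U) := by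
  classical
  obtain ⟨S, C, hCU, hC⟩ := hU
  obtain ⟨T, hT, hTφ⟩ := exists_isSeparated_forall_dist_lt hφ S (half_pos hε)
  refine ⟨S * T, fun g => {x | ∃ s ∈ S, ∃ t ∈ T, s * t = g ∧ x ∈ C s ∧ dist (φ x) (φ s) < ε / 2},
    fun g _ => ?_, fun h => ?_⟩
  · rintro ⟨x, y⟩ ⟨⟨s, hs, t, ht, hst, hxC, hxφ⟩, ⟨s', hs', t', ht', hst', hyC, hyφ⟩⟩
    obtain rfl : t = t' := hT t ht t' ht' s hs s' hs' (hst.trans hst'.symm)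
    obtain rfl : s = s' := mul_right_cancel (hst.trans hst'.symm)
    refine ⟨?_, hCU s hs ⟨hxC, hyC⟩⟩
    exact (dist_triangle_right _ _ (φ s)).trans_lt (by linarith)
  · obtain ⟨t, ht, htφ⟩ := hTφ h
    obtain ⟨s, hs, hsC⟩ := hC (t * h)
    rw [← mul_assoc] at hsC
    exact ⟨s * t, mul_mem_mul hs ht, s, hs, t, ht, rfl, hsC, by simpa [mul_assoc] using htφ s hs⟩

lemma CapturesTranslates.mono {G : Type*} [Mul G] {U V : Set (G × G)} (hUV : U ⊆ V)
    (hU : CapturesTranslates U) : CapturesTranslates V :=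
  have ⟨S, C, hCU, hC⟩ := hU
  ⟨S, C, fun s hs => (hCU s hs).trans hUV, hC⟩

theorem capturesTranslates_of_mem_uniformity {U : Set (G × G)}
    (hU : U ∈ 𝓤[minimalUniformSpace G]) : CapturesTranslates U := by
  rw [iInf_uniformity] at hU
  refine Filter.iInf_sets_induct hU capturesTranslates_univ fun {φ V W} hV hW => ?_
  rw [uniformity_comap, (Metric.uniformity_basis_dist.comap _).mem_iff] at hV
  obtain ⟨ε, hε, hεV⟩ := hV
  exact (hW.inter_dist_lt φ.2 hε).mono (Set.inter_subset_inter_left W hεV)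

end MinimalUniformity

section UniformlyContinuous

lemma isBounded_range_lp {α E : Type*} [NormedAddCommGroup E] (φ : lp (fun _ : α => E) ∞) :
    Bornology.IsBounded (Set.range φ) :=
  isBounded_iff_forall_norm_le.2
    ⟨‖φ‖, Set.forall_mem_range.2 (lp.norm_apply_le_norm ENNReal.top_ne_zero φ)⟩

variable {𝕜 α A : Type*} [NormedField 𝕜] [UniformSpace α] [NormedRing A] [NormOneClass A]
  [NormedAlgebra 𝕜 A]

variable (𝕜 α A) in
/-- The bounded functions on a uniform space that are uniformly continuous, as a subalgebra of
`ℓ∞`. -/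
def uniformContinuousSubalgebra : Subalgebra 𝕜 (lp (fun _ : α => A) ∞) where
  carrier := {φ | UniformContinuous (φ : α → A)}
  add_mem' := UniformContinuous.add
  mul_mem' := fun {φ ψ} hφ hψ => by
    have hbdd : Bornology.IsBounded (Set.range φ ×ˢ Set.range ψ) :=
      (isBounded_range_lp φ).prod (isBounded_range_lp ψ)
    have := hbdd.uniformContinuousOn_smul.comp (hφ.prodMk hψ).uniformContinuousOn
      (s := Set.univ) (fun x _ => ⟨⟨x, rfl⟩, ⟨x, rfl⟩⟩)
    exact uniformContinuousOn_univ.1 this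
  algebraMap_mem' := fun _ => uniformContinuous_const

lemma mem_uniformContinuousSubalgebra {φ : lp (fun _ : α => A) ∞} :
    φ ∈ uniformContinuousSubalgebra 𝕜 α A ↔ UniformContinuous (φ : α → A) :=
  Iff.rfl

lemma isClosed_uniformContinuousSubalgebra :
    IsClosed (uniformContinuousSubalgebra 𝕜 α A : Set (lp (fun _ : α => A) ∞)) := by
  refine isClosed_of_closure_subset fun φ hφ =>
    uniformContinuous_of_uniform_approx_of_uniformContinuous fun U hU => ?_
  obtain ⟨ε, hε, hεU⟩ := Metric.mem_uniformity_dist.1 hU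
  obtain ⟨ψ, hψ, hφψ⟩ := Metric.mem_closure_iff.1 hφ ε hε
  refine ⟨ψ, hψ, fun x => hεU ?_⟩
  rw [dist_eq_norm] at hφψ ⊢
  exact (lp.norm_apply_le_norm ENNReal.top_ne_zero (φ - ψ) x).trans_lt hφψ

end UniformlyContinuous

section UniversalSet

open scoped Cardinal

lemma exists_forall_notMem_of_mk_lt {α ι : Type u} [Infinite α] (h : #ι < #α)
    (F : ι → Finset α) : ∃ a, ∀ i, a ∉ F i := by
  by_contra! hcover
  choose i hi using hcover
  obtain ⟨j, hj⟩ := Cardinal.exists_infinite_fiber i h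
  exact hj.not_finite ((F j).finite_toSet.subset fun a (ha : i a = j) => ha ▸ hi a)

variable {G : Type u} [Group G] [Infinite G]

lemma exists_pairwise_disjoint_mul_singleton [DecidableEq G] {ι : Type u} (hι : #ι ≤ #G)
    (S : ι → Finset G) :
    ∃ f : ι → G, Pairwise fun i j => Disjoint (S i * {f i}) (S j * {f j}) := by
  obtain ⟨lo, wf, hord⟩ := Cardinal.exists_ord_eq_type_lt ι
  have exists_next (i : ι) (f : ∀ j < i, G) :
      ∃ g, ∀ j : Set.Iio i, g ∉ (S i)⁻¹ * (S j * {f j j.2}) :=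
    exists_forall_notMem_of_mk_lt ((Cardinal.mk_Iio_lt i hord).trans_le hι) _
  choose next hnext using exists_next
  let f : ι → G := wf.wf.fix next
  have disjoint_of_lt {i j : ι} (hji : j < i) : Disjoint (S i * {f i}) (S j * {f j}) := by
    refine disjoint_left.2 fun x hxi hxj => hnext i (fun j _ => f j) ⟨j, hji⟩ ?_
    obtain ⟨s, hs, g, hg, rfl⟩ := mem_mul.1 hxi
    rw [mem_singleton.1 hg] at hxj
    rw [← wf.wf.fix_eq next i]
    exact mem_mul.2 ⟨s⁻¹, inv_mem_inv hs, s * f i, hxj, inv_mul_cancel_left s (f i)⟩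
  exact ⟨f, fun i j hij => hij.lt_or_gt.elim (fun h => (disjoint_of_lt h).symm) disjoint_of_lt⟩

/-- Every subset of every finite set `S` is the trace on `S` of some right translate of `ω`. -/
def IsUniversal {G : Type*} [Mul G] (ω : Set G) : Prop :=
  ∀ S B : Finset G, ∃ h, ∀ s ∈ S, (s * h ∈ ω ↔ s ∈ B)

variable (G) in
theorem exists_isUniversal : ∃ ω : Set G, IsUniversal ω := by
  classical
  have hcard : #(Finset G × Finset G) ≤ #G := by simp
  obtain ⟨f, hf⟩ := exists_pairwise_disjoint_mul_singleton hcard Prod.fst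
  refine ⟨⋃ p : Finset G × Finset G, ↑((p.1 ∩ p.2) * {f p}), fun S B => ⟨f (S, B), fun s hs => ?_⟩⟩
  rw [Set.mem_iUnion]
  constructor
  · rintro ⟨p, hp⟩
    have hp' : s * f (S, B) ∈ p.1 * {f p} := mul_subset_mul_right inter_subset_left hp
    obtain rfl : p = (S, B) := by_contra fun hne =>
      disjoint_left.1 (hf hne) hp' (mul_mem_mul hs (mem_singleton_self _))
    obtain ⟨t, ht, g, hg, hst⟩ := mem_mul.1 hp
    rw [mem_singleton.1 hg, mul_left_inj] at hst
    exact hst ▸ (mem_inter.1 ht).2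
  · exact fun hsB => ⟨(S, B), mul_mem_mul (mem_inter.2 ⟨hs, hsB⟩) (mem_singleton_self _)⟩

theorem IsUniversal.not_capturesTranslates {G : Type*} [Mul G] {ω : Set G} (hω : IsUniversal ω) :
    ¬ CapturesTranslates {p : G × G | p.1 ∈ ω ↔ p.2 ∈ ω} := by
  classical
  rintro ⟨S, C, hCω, hC⟩
  obtain ⟨h, hh⟩ := hω S {s ∈ S | Disjoint (C s) ω}
  obtain ⟨s, hs, hsC⟩ := hC h
  have mem_iff_disjoint : s * h ∈ ω ↔ Disjoint (C s) ω := by simpa [hs] using hh s hs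
  have hmem : s * h ∈ ω := mem_iff_disjoint.2 <| Set.disjoint_left.2 fun x hx hxω =>
    have hsω : s * h ∈ ω := (hCω s hs (Set.mk_mem_prod hx hsC)).1 hxω
    Set.disjoint_left.1 (mem_iff_disjoint.1 hsω) hx hxω
  exact Set.disjoint_left.1 (mem_iff_disjoint.1 hmem) hsC hmem

theorem IsUniversal.not_uniformContinuous_indicator_one {ω : Set G} (hω : IsUniversal ω) :
    ¬ @UniformContinuous _ _ (minimalUniformSpace G) _ (ω.indicator (1 : G → ℝ)) := by
  intro huc
  have hU := capturesTranslates_of_mem_uniformity (huc (Metric.dist_mem_uniformity one_pos))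
  refine hω.not_capturesTranslates (hU.mono fun ⟨g, g'⟩ hgg' => ?_)
  by_cases hg : g ∈ ω <;> by_cases hg' : g' ∈ ω <;> simp_all

end UniversalSet

end MinimalFunctions

/-- Let `G` be an infinite discrete group.  Then the smallest norm-closed
subalgebra `𝔄(G)` of `ℓ∞(G)` containing all minimal functions is a proper subalgebra:
`𝔄(G) ≠ ℓ∞(G)`.  Here `ℓ∞(G)` is realized as `lp (fun _ : G => ℝ) ∞`. -/
theorem algebra_of_minimal_functions_proper
    (G : Type u) [Group G] [Infinite G] :
    (Algebra.adjoin ℝ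
        {φ : lp (fun _ : G => ℝ) ∞ | IsMinimalFunction (φ : G → ℝ)}).topologicalClosure
      ≠ ⊤ := by
  intro htop
  obtain ⟨ω, hω⟩ := MinimalFunctions.exists_isUniversal G
  have hmem : Memℓp (ω.indicator (1 : G → ℝ)) ∞ :=
    memℓp_infty ⟨1, Set.forall_mem_range.2 fun g =>
      (norm_indicator_le_norm_self _ g).trans_eq norm_one⟩
  let _ := MinimalFunctions.minimalUniformSpace G
  have hle : (⊤ : Subalgebra ℝ (lp (fun _ : G => ℝ) ∞)) ≤
      MinimalFunctions.uniformContinuousSubalgebra ℝ G ℝ := by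
    rw [← htop]
    refine Subalgebra.topologicalClosure_minimal (Algebra.adjoin_le fun φ hφ => ?_)
      MinimalFunctions.isClosed_uniformContinuousSubalgebra
    exact MinimalFunctions.mem_uniformContinuousSubalgebra.2
      (MinimalFunctions.uniformContinuous_minimalUniformSpace hφ)
  exact hω.not_uniformContinuous_indicator_one
    (MinimalFunctions.mem_uniformContinuousSubalgebra.1
      (hle (Algebra.mem_top (x := ⟨_, hmem⟩))))
end

section
/- Let G be a countable, infinite discrete group and let X be a metrizable, minimal G-flow. Then there exists a minimal, metrizable, free G-flow Y such that X and Y are disjoint. -/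
open Pointwise

universe u v

/-- A bundled `G`-flow carrier: a type with a topology and a `G`-action. -/
structure GFlow (G : Type u) [Group G] : Type (u + 1) where
  carrier : Type u
  [topology : TopologicalSpace carrier]
  [mulAction : MulAction G carrier]

attribute [instance] GFlow.topology GFlow.mulAction

/-!
It suffices to find a free subshift `Z` for which `X × Z` is minimal. Subshifts are approximated
from outside by strongly irreducible ones, in which partial configurations that are far apart can be
glued. The proper 3-colourings of all the graphs `m ↦ g * m`, `g ≠ 1`, form a strongly irreducible
subshift on which `G` acts freely. By the Rasiowa–Sikorski lemma it is then enough, given a strongly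
irreducible `Y`, a nonempty open `U ⊆ X` and an open `O` meeting `Y`, to find a strongly irreducible
`Y' ⊆ Y` such that every orbit in `X × Y'` visits `U × O`.

For this, the separated covering property of `X` gives a finite set `S` of far apart elements with
`S⁻¹U = X`. Gluing places a pattern forcing `O` at every `s ∈ S`; if the resulting big pattern
appears in `y` at `e`, then for every `x` some `s ∈ S` brings `e • x` to `U` and `e • y` to `O`. The
points of `Y` in which the big pattern appears syndetically form a strongly irreducible `Y'`.

The separated covering property follows from minimality by compactness once, for every finite `E`
and every infinite `R ⊆ G`, there are a finite `A ⊆ R` and, for all finite `M`, sets `S` without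
two points differing by an element of `E \ {1}` which meet `A * m` for each `m ∈ M`. Such `S` are
read off a random 2-colouring of `G`, via the local lemma.
-/

section LocalLemma

open MeasureTheory

variable {Ω ι : Type*} {A : ι → Set Ω}

/-- The event that none of the events `A i`, `i ∈ T`, occurs. -/
def avoiding (A : ι → Set Ω) (T : Finset ι) : Set Ω :=
  ⋂ i ∈ T, (A i)ᶜ

theorem mem_avoiding {T : Finset ι} {ω : Ω} : ω ∈ avoiding A T ↔ ∀ i ∈ T, ω ∉ A i := by
  simp only [avoiding, Set.mem_iInter, Set.mem_compl_iff]

theorem avoiding_anti {R T : Finset ι} (h : R ⊆ T) : avoiding A T ⊆ avoiding A R :=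
  Set.biInter_mono h fun _ _ ↦ subset_rfl

theorem avoiding_insert [DecidableEq ι] (i : ι) (T : Finset ι) :
    avoiding A (insert i T) = avoiding A T \ A i := by
  rw [avoiding, Finset.set_biInter_insert, Set.inter_comm, Set.sdiff_eq, avoiding]

variable [MeasurableSpace Ω] {μ : Measure Ω} [IsFiniteMeasure μ]

theorem measureReal_avoiding_insert [DecidableEq ι] {i : ι}
    (hA : MeasurableSet (A i)) (T : Finset ι) :
    μ.real (avoiding A (insert i T)) =
      μ.real (avoiding A T) - μ.real (A i ∩ avoiding A T) := by
  rw [avoiding_insert, Set.inter_comm, eq_sub_iff_add_eq,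
    measureReal_sdiff_add_inter hA]

theorem pow_mul_measureReal_avoiding_le [DecidableEq ι]
    (hA : ∀ i, MeasurableSet (A i)) {ε : ℝ} (hε : ε ≤ 1) {R K : Finset ι} (hRK : Disjoint R K)
    (h : ∀ k ∈ K, ∀ T ⊂ R ∪ K, μ.real (A k ∩ avoiding A T) ≤ ε * μ.real (avoiding A T)) :
    (1 - ε) ^ K.card * μ.real (avoiding A R) ≤ μ.real (avoiding A (R ∪ K)) := by
  induction K using Finset.induction_on with
  | empty => simp
  | insert k K hk ih =>
    have hkR : k ∉ R ∪ K := by grind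
    have hlt : R ∪ K ⊂ R ∪ insert k K := by
      rw [Finset.union_insert]; exact Finset.ssubset_insert hkR
    have hK := ih (by grind) fun j hj T hT ↦
      h j (Finset.mem_insert_of_mem hj) T (hT.trans hlt)
    have hk' := h k (Finset.mem_insert_self k K) (R ∪ K) hlt
    rw [Finset.union_insert, measureReal_avoiding_insert (hA k), Finset.card_insert_of_notMem hk]
    calc (1 - ε) ^ (K.card + 1) * μ.real (avoiding A R)
        = (1 - ε) * ((1 - ε) ^ K.card * μ.real (avoiding A R)) := by ring
      _ ≤ (1 - ε) * μ.real (avoiding A (R ∪ K)) := by gcongr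
      _ ≤ μ.real (avoiding A (R ∪ K)) - μ.real (A k ∩ avoiding A (R ∪ K)) := by linarith

theorem half_le_one_sub_inv_two_mul_pow {d n : ℕ} (hd : 0 < d) (hn : n ≤ d) :
    (1 / 2 : ℝ) ≤ (1 - (2 * d : ℝ)⁻¹) ^ n := by
  have hd' : (1 : ℝ) ≤ d := by exact_mod_cast hd
  have hinv : (2 * d : ℝ)⁻¹ ≤ 1 := inv_le_one_of_one_le₀ (by linarith)
  have hnd : (n : ℝ) * (2 * d : ℝ)⁻¹ ≤ 1 / 2 := by
    rw [← div_eq_mul_inv, div_le_div_iff₀ (by positivity) two_pos]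
    have : (n : ℝ) ≤ d := by exact_mod_cast hn
    linarith
  have hbern := one_add_mul_le_pow (a := -(2 * d : ℝ)⁻¹) (by linarith) n
  rw [← sub_eq_add_neg] at hbern
  linarith

variable {N : ι → Finset ι} {S : Finset ι} {d : ℕ} {p : ℝ}

/- Split `T` into the neighbours and the non-neighbours of `i`: the latter barely influence `A i`,
and by induction avoiding the former as well costs at most a factor `1 / 2`. -/
theorem measureReal_inter_avoiding_le (hA : ∀ i, MeasurableSet (A i)) (hd : 0 < d)
    (hN : ∀ i ∈ S, (N i).card ≤ d) (hp : 4 * d * p ≤ 1)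
    (h : ∀ i ∈ S, ∀ T ⊆ S, Disjoint T (N i) →
      μ.real (A i ∩ avoiding A T) ≤ p * μ.real (avoiding A T))
    {T : Finset ι} (hT : T ⊆ S) {i : ι} (hi : i ∈ S) :
    μ.real (A i ∩ avoiding A T) ≤ (2 * d : ℝ)⁻¹ * μ.real (avoiding A T) := by
  classical
  induction T using Finset.strongInduction generalizing i with
  | H T ih =>
    have hd' : (1 : ℝ) ≤ d := by exact_mod_cast hd
    have hinv : (2 * d : ℝ)⁻¹ ≤ 1 := inv_le_one_of_one_le₀ (by linarith)
    have hsplit : T \ N i ∪ T ∩ N i = T := Finset.sdiff_union_inter T (N i)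
    have hfar := h i hi (T \ N i) (Finset.sdiff_subset.trans hT) Finset.sdiff_disjoint
    have hnear := pow_mul_measureReal_avoiding_le hA hinv (Finset.disjoint_sdiff_inter T (N i))
      fun k hk R hR ↦ ih R (hsplit ▸ hR) ((hsplit ▸ hR).subset.trans hT)
        (hT (Finset.mem_inter.1 hk).1)
    rw [hsplit] at hnear
    have hhalf := half_le_one_sub_inv_two_mul_pow hd
      ((Finset.card_le_card (Finset.inter_subset_right : T ∩ N i ⊆ N i)).trans (hN i hi))
    have hdouble : μ.real (avoiding A (T \ N i)) ≤ 2 * μ.real (avoiding A T) := by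
      linarith [mul_le_mul_of_nonneg_right hhalf
        (measureReal_nonneg (μ := μ) (s := avoiding A (T \ N i)))]
    calc μ.real (A i ∩ avoiding A T)
        ≤ μ.real (A i ∩ avoiding A (T \ N i)) := measureReal_mono
          (Set.inter_subset_inter_right _ (avoiding_anti Finset.sdiff_subset))
      _ ≤ p * μ.real (avoiding A (T \ N i)) := hfar
      _ ≤ (4 * d : ℝ)⁻¹ * μ.real (avoiding A (T \ N i)) := by
        gcongr
        rw [← one_div, le_div_iff₀ (by positivity)]
        linarith
      _ ≤ (4 * d : ℝ)⁻¹ * (2 * μ.real (avoiding A T)) := by gcongr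
      _ = (2 * d : ℝ)⁻¹ * μ.real (avoiding A T) := by field_simp; norm_num

/-- The symmetric Lovász Local Lemma, in its lopsided form: instead of independence of `A i` from
the events outside `N i`, avoiding those events is only required not to make `A i` likelier
than `p`. -/
theorem measureReal_avoiding_pos [NeZero μ] (hA : ∀ i, MeasurableSet (A i)) (hd : 0 < d)
    (hN : ∀ i ∈ S, (N i).card ≤ d) (hp : 4 * d * p ≤ 1)
    (h : ∀ i ∈ S, ∀ T ⊆ S, Disjoint T (N i) →
      μ.real (A i ∩ avoiding A T) ≤ p * μ.real (avoiding A T)) :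
    0 < μ.real (avoiding A S) := by
  classical
  have hd' : (1 : ℝ) ≤ d := by exact_mod_cast hd
  have hinv : (2 * d : ℝ)⁻¹ < 1 := inv_lt_one_of_one_lt₀ (by linarith)
  have hpow := pow_mul_measureReal_avoiding_le (R := ∅) hA hinv.le (Finset.disjoint_empty_left S)
    fun i hi T hT ↦ measureReal_inter_avoiding_le hA hd hN hp h (by simpa using hT.subset) hi
  rw [Finset.empty_union] at hpow
  have huniv : 0 < μ.real (avoiding A ∅) := by simp [avoiding]
  exact (mul_pos (pow_pos (sub_pos.2 hinv) _) huniv).trans_le hpow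

end LocalLemma

section RandomColoring

open MeasureTheory

theorem measureReal_infinitePi_inter {V : Type*} {Z : V → Type*} [∀ v, MeasurableSpace (Z v)]
    (P : ∀ v, Measure (Z v)) [∀ v, IsProbabilityMeasure (P v)] {I J : Set V} (hIJ : Disjoint I J)
    {A B : Set (∀ v, Z v)} (hA : MeasurableSet[cylinderEvents I] A)
    (hB : MeasurableSet[cylinderEvents J] B) :
    (Measure.infinitePi P).real (A ∩ B) =
      (Measure.infinitePi P).real A * (Measure.infinitePi P).real B := by
  have hindep := (ProbabilityTheory.iIndepFun_infinitePi (P := P) (X := fun _ ↦ id)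
    fun _ ↦ measurable_id).iIndep
  have hIJ' := ProbabilityTheory.indep_iSup_of_disjoint
    (fun v ↦ (measurable_pi_apply v).comap_le) hindep hIJ
  rw [measureReal_def, (ProbabilityTheory.Indep_iff _ _ _).1 hIJ' A B hA hB, ENNReal.toReal_mul,
    measureReal_def, measureReal_def]

variable {V : Type*}

/-- The set of 2-colourings of `V` that show the pattern `q` on the window `K`. -/
def colorCylinder (K : Finset V) (q : V → Bool) : Set (V → Bool) :=
  (K : Set V).pi fun v ↦ {q v}

theorem measurableSet_cylinderEvents_colorCylinder {I : Set V} {K : Finset V} (hK : ↑K ⊆ I)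
    (q : V → Bool) :
    MeasurableSet[cylinderEvents I] (colorCylinder K q) := by
  rw [colorCylinder, Set.pi_def]
  exact MeasurableSet.biInter K.countable_toSet fun v hv ↦
    measurable_cylinderEvent_apply (hK hv) (measurableSet_singleton (q v))

/-- The law of a random 2-colouring of `V`, the colours of the points being independent fair
coin tosses. -/
noncomputable abbrev fairColoring (V : Type*) : Measure (V → Bool) :=
  Measure.infinitePi fun _ ↦ (PMF.uniformOfFintype Bool).toMeasure

theorem fairColoring_real_colorCylinder (K : Finset V) (q : V → Bool) :
    (fairColoring V).real (colorCylinder K q) = (1 / 2) ^ K.card := by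
  have hcoin (b : Bool) : (PMF.uniformOfFintype Bool).toMeasure {b} = 2⁻¹ := by
    simp
  rw [measureReal_def, colorCylinder, Measure.infinitePi_pi _ fun _ _ ↦ measurableSet_singleton _]
  simp [hcoin]

variable {α : Type*} {K : α → Finset V} {q : α → V → Bool} {A : Finset α} {I : Set V}

theorem measurableSet_cylinderEvents_avoiding (hK : ∀ a ∈ A, ↑(K a) ⊆ I) :
    MeasurableSet[cylinderEvents I]
      (avoiding (fun a ↦ colorCylinder (K a) (q a)) A) :=
  A.measurableSet_biInter fun a ha ↦
    (measurableSet_cylinderEvents_colorCylinder (hK a ha) (q a)).compl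

theorem fairColoring_real_avoiding (hK : (A : Set α).PairwiseDisjoint K) :
    (fairColoring V).real (avoiding (fun a ↦ colorCylinder (K a) (q a)) A) =
      ∏ a ∈ A, (1 - (1 / 2) ^ (K a).card) := by
  classical
  induction A using Finset.induction_on with
  | empty => simp [avoiding]
  | insert a A ha ih =>
    rw [Finset.coe_insert, Set.pairwiseDisjoint_insert_of_notMem (by simpa)] at hK
    simp only [Finset.mem_coe] at hK
    have hdisj : Disjoint (K a : Set V) (⋃ b ∈ A, K b) := by
      simpa only [Set.disjoint_iUnion_right, Finset.disjoint_coe] using hK.2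
    have hindep := measureReal_infinitePi_inter (fun _ ↦ (PMF.uniformOfFintype Bool).toMeasure)
      hdisj (measurableSet_cylinderEvents_colorCylinder subset_rfl (q a))
      (measurableSet_cylinderEvents_avoiding (K := K) (q := q) (A := A)
        fun b hb ↦ Set.subset_biUnion_of_mem (u := fun b ↦ (K b : Set V)) hb)
    rw [measureReal_avoiding_insert (A := fun a ↦ colorCylinder (K a) (q a))
        (cylinderEvents_le_pi _ (measurableSet_cylinderEvents_colorCylinder subset_rfl (q a))),
      hindep, fairColoring_real_colorCylinder, ih hK.1, Finset.prod_insert ha, one_sub_mul]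

theorem fairColoring_real_avoiding_le {k : ℕ} (hK : (A : Set α).PairwiseDisjoint K)
    (hk : ∀ a ∈ A, (K a).card ≤ k) :
    (fairColoring V).real (avoiding (fun a ↦ colorCylinder (K a) (q a)) A) ≤
      (1 - (1 / 2) ^ k) ^ A.card := by
  rw [fairColoring_real_avoiding hK, ← Finset.prod_const]
  refine Finset.prod_le_prod (fun a _ ↦ sub_nonneg.2 ?_) fun a ha ↦ sub_le_sub_left ?_ 1
  · exact pow_le_one₀ (by norm_num) (by norm_num)
  · exact pow_le_pow_of_le_one (by norm_num) (by norm_num) (hk a ha)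

/- The local lemma applied to a random colouring: the event at `m` is that no window of `m` shows
its pattern. -/
theorem exists_coloring_forall_exists_pattern {ι : Type*} (M : Finset ι)
    {K : ι → α → Finset V} (q : ι → α → V → Bool) {N : ι → Finset ι} {d k : ℕ} (hd : 0 < d)
    (hk : ∀ m ∈ M, ∀ a ∈ A, (K m a).card ≤ k) (hK : ∀ m ∈ M, (A : Set α).PairwiseDisjoint (K m))
    (hN : ∀ m ∈ M, (N m).card ≤ d)
    (hKN : ∀ m ∈ M, ∀ m' ∉ N m, ∀ a ∈ A, ∀ a' ∈ A, Disjoint (K m a) (K m' a'))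
    (hp : 4 * d * (1 - (1 / 2) ^ k : ℝ) ^ A.card ≤ 1) :
    ∃ c : V → Bool, ∀ m ∈ M, ∃ a ∈ A, ∀ v ∈ K m a, c v = q m a v := by
  set noPattern : ι → Set (V → Bool) :=
    fun m ↦ avoiding (fun a ↦ colorCylinder (K m a) (q m a)) A with hdef
  have hmeas {I : Set V} (m : ι) (hI : ∀ a ∈ A, ↑(K m a) ⊆ I) :
      MeasurableSet[cylinderEvents I] (noPattern m) :=
    measurableSet_cylinderEvents_avoiding hI
  have hpos : 0 < (fairColoring V).real (avoiding noPattern M) := by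
    refine measureReal_avoiding_pos
      (fun m ↦ cylinderEvents_le_pi _ (hmeas m fun _ _ ↦ Set.subset_univ _)) hd hN hp
      fun m hm T _ hTN ↦ ?_
    have hfar : MeasurableSet[cylinderEvents (⋃ a ∈ A, ↑(K m a))ᶜ] (avoiding noPattern T) := by
      refine T.measurableSet_biInter fun m' hm' ↦ (hmeas m' fun a' ha' ↦ ?_).compl
      simp only [Set.subset_compl_iff_disjoint_right, Set.disjoint_iUnion_right,
        Finset.disjoint_coe]
      exact fun a ha ↦
        (hKN m hm m' (Finset.disjoint_left.1 hTN hm') a ha a' ha').symm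
    rw [measureReal_infinitePi_inter _ disjoint_compl_right (hmeas m fun a ha ↦
      Set.subset_biUnion_of_mem (u := fun a ↦ (K m a : Set V)) ha) hfar]
    gcongr
    exact fairColoring_real_avoiding_le (hK m hm) (hk m hm)
  obtain ⟨c, hc⟩ := nonempty_of_measureReal_ne_zero hpos.ne'
  refine ⟨c, fun m hm ↦ ?_⟩
  simpa [hdef, mem_avoiding, colorCylinder] using mem_avoiding.1 hc m hm

end RandomColoring

section SeparatedCovering

variable {G : Type*} [Group G]

theorem exists_finset_pairwiseDisjoint_mul_singleton [DecidableEq G] (E : Finset G) {R : Set G}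
    (hR : R.Infinite) (n : ℕ) :
    ∃ A : Finset G, ↑A ⊆ R ∧ A.card = n ∧
      (A : Set G).PairwiseDisjoint fun a ↦ E * ({a} : Finset G) := by
  induction n with
  | zero => exact ⟨∅, by simp⟩
  | succ n ih =>
    obtain ⟨A, hAR, hcard, hA⟩ := ih
    obtain ⟨b, hbR, hb⟩ := hR.exists_notMem_finset (A ∪ E⁻¹ * (E * A))
    rw [Finset.notMem_union] at hb
    refine ⟨insert b A, ?_, by rw [Finset.card_insert_of_notMem hb.1, hcard], ?_⟩
    · rw [Finset.coe_insert]
      exact Set.insert_subset hbR hAR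
    rw [Finset.coe_insert, Set.pairwiseDisjoint_insert_of_notMem (by simpa using hb.1)]
    refine ⟨hA, fun a ha ↦ Finset.disjoint_left.2 fun g hgb hga ↦ hb.2 ?_⟩
    obtain ⟨e, he, rfl⟩ := by simpa [Finset.mem_mul] using hgb
    rw [← inv_mul_cancel_left e b]
    exact Finset.mul_mem_mul (Finset.inv_mem_inv he)
      (Finset.mul_subset_mul_left (Finset.singleton_subset_iff.2 ha) hga)

theorem exists_mul_sq_mul_pow_le_one (C : ℝ) {r : ℝ} (hr : 0 ≤ r) (hr' : r < 1) :
    ∃ n : ℕ, 0 < n ∧ C * n ^ 2 * r ^ n ≤ 1 := by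
  have hlim := (tendsto_pow_const_mul_const_pow_of_lt_one 2 hr hr').const_mul C
  rw [mul_zero] at hlim
  obtain ⟨n, hn, hn0⟩ := ((hlim.eventually (gt_mem_nhds zero_lt_one)).and
    (Filter.eventually_gt_atTop 0)).exists
  exact ⟨n, hn0, by rw [mul_assoc]; exact hn.le⟩

theorem mem_mul_singleton_iff [DecidableEq G] {E : Finset G} {g h : G} :
    g ∈ E * ({h} : Finset G) ↔ g * h⁻¹ ∈ E := by
  simp only [Finset.mem_mul, Finset.mem_singleton, exists_eq_left, ← eq_mul_inv_iff_mul_eq,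
    exists_eq_right]

theorem pairwiseDisjoint_mul_singleton_mul [DecidableEq G] {E A : Finset G}
    (hA : (A : Set G).PairwiseDisjoint fun a ↦ E * ({a} : Finset G)) (m : G) :
    (A : Set G).PairwiseDisjoint fun a ↦ E * ({a * m} : Finset G) := by
  intro a ha b hb hab
  have htranslate {a g : G} (hg : g ∈ E * ({a * m} : Finset G)) :
      g * m⁻¹ ∈ E * ({a} : Finset G) := by
    simpa only [mem_mul_singleton_iff, mul_inv_rev, mul_assoc] using hg
  exact Finset.disjoint_left.2 fun g hga hgb ↦
    Finset.disjoint_left.1 (hA ha hb hab) (htranslate hga) (htranslate hgb)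

theorem disjoint_mul_singleton_of_notMem [DecidableEq G] {E A : Finset G} {a a' m m' : G}
    (ha : a ∈ A) (ha' : a' ∈ A) (hm' : m' ∉ A⁻¹ * (E⁻¹ * (E * (A * {m})))) :
    Disjoint (E * ({a * m} : Finset G)) (E * ({a' * m'} : Finset G)) := by
  refine Finset.disjoint_left.2 fun g hg hg' ↦ hm' ?_
  rw [mem_mul_singleton_iff] at hg hg'
  have hm : a'⁻¹ * ((g * (a' * m')⁻¹)⁻¹ * (g * (a * m)⁻¹ * (a * m))) = m' := by group
  rw [← hm]
  exact Finset.mul_mem_mul (Finset.inv_mem_inv ha') (Finset.mul_mem_mul (Finset.inv_mem_inv hg')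
    (Finset.mul_mem_mul hg (Finset.mul_mem_mul ha (Finset.mem_singleton_self m))))

/- Colour `G` so that for every `m ∈ M` some translate `E * {a * m}` has its only `true` point at
`a * m`, and let `S` be the set of points `h` which are the only `true` point of `E * {h}`. -/
theorem exists_finset_forall_exists_separated {E : Finset G} (h1 : 1 ∈ E) {R : Set G}
    (hR : R.Infinite) :
    ∃ A : Finset G, ↑A ⊆ R ∧ ∀ M : Finset G, ∃ S : Set G,
      (∀ s ∈ S, ∀ e ∈ E, e * s ∈ S → e = 1) ∧ ∀ m ∈ M, ∃ a ∈ A, a * m ∈ S := by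
  classical
  have hE : 0 < E.card := Finset.card_pos.2 ⟨1, h1⟩
  have hcoin : (1 / 2 : ℝ) ^ E.card ≤ 1 := pow_le_one₀ (by norm_num) (by norm_num)
  obtain ⟨n, hn0, hn⟩ := exists_mul_sq_mul_pow_le_one (4 * E.card ^ 2)
    (r := 1 - (1 / 2) ^ E.card) (by linarith) (sub_lt_self 1 (by positivity))
  obtain ⟨A, hAR, hAn, hA⟩ := exists_finset_pairwiseDisjoint_mul_singleton E hR n
  refine ⟨A, hAR, fun M ↦ ?_⟩
  have hcard (m : G) : (A⁻¹ * (E⁻¹ * (E * (A * {m})))).card ≤ E.card ^ 2 * n ^ 2 := calc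
    _ ≤ A⁻¹.card * (E⁻¹.card * (E.card * (A.card * ({m} : Finset G).card))) := by
        iterate 3 refine Finset.card_mul_le.trans (Nat.mul_le_mul_left _ ?_)
        exact Finset.card_mul_le
    _ = E.card ^ 2 * n ^ 2 := by
        simp only [Finset.card_inv, Finset.card_singleton, hAn]
        ring
  obtain ⟨c, hc⟩ := exists_coloring_forall_exists_pattern M (fun m a v ↦ decide (v = a * m))
    (by positivity) (fun m _ a _ ↦ (Finset.card_mul_singleton E (a * m)).le)
    (fun m _ ↦ pairwiseDisjoint_mul_singleton_mul hA m) (fun m _ ↦ hcard m)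
    (fun m _ m' hm' a ha a' ha' ↦ disjoint_mul_singleton_of_notMem ha ha' hm')
    (by rw [hAn]; push_cast; convert hn using 2; ring)
  refine ⟨{h | ∀ v ∈ E * ({h} : Finset G), c v = decide (v = h)}, fun s hs e he hes ↦ ?_, hc⟩
  have hfalse : c (e * s) = decide (e * s = s) :=
    hs _ (mem_mul_singleton_iff.2 (by simpa using he))
  have htrue : c (e * s) = decide (e * s = e * s) :=
    hes _ (mem_mul_singleton_iff.2 (by simpa using h1))
  rw [htrue, decide_eq_decide, mul_eq_right] at hfalse
  exact hfalse.1 rfl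

section Flow

variable {X : Type*} [TopologicalSpace X] [CompactSpace X] [MulAction G X]
  [ContinuousConstSMul G X]

theorem exists_finset_subset_forall_exists_smul_mem {U : Set X} (hU : IsOpen U) {S : Set G}
    (hS : ∀ x : X, ∃ s ∈ S, s • x ∈ U) :
    ∃ T : Finset G, ↑T ⊆ S ∧ ∀ x : X, ∃ t ∈ T, t • x ∈ U := by
  classical
  obtain ⟨T, hTS, hTf, hT⟩ := isCompact_univ.elim_finite_subcover_image (b := S)
    (fun g _ ↦ hU.preimage (continuous_const_smul g))
    fun x _ ↦ Set.mem_iUnion₂.2 (by simpa using hS x)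
  exact ⟨hTf.toFinset, by simpa, fun x ↦ by simpa using hT (Set.mem_univ x)⟩

namespace IsMinimalFlow

theorem exists_finset_forall_exists_smul_mem (hX : IsMinimalFlow G X) {U : Set X} (hU : IsOpen U)
    (hne : U.Nonempty) : ∃ T : Finset G, ∀ x : X, ∃ t ∈ T, t • x ∈ U := by
  obtain ⟨T, -, hT⟩ := exists_finset_subset_forall_exists_smul_mem hU (S := Set.univ) fun x ↦ by
    obtain ⟨-, ⟨g, rfl⟩, hg⟩ := (hX x).exists_mem_open hU hne
    exact ⟨g, Set.mem_univ g, hg⟩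
  exact ⟨T, hT⟩

theorem infinite_setOf_smul_mem [Infinite G] (hX : IsMinimalFlow G X) {U : Set X} (hU : IsOpen U)
    (hne : U.Nonempty) (x : X) : {g : G | g • x ∈ U}.Infinite := by
  obtain ⟨T, hT⟩ := hX.exists_finset_forall_exists_smul_mem hU hne
  intro hfin
  have huniv : (T : Set G)⁻¹ * {g : G | g • x ∈ U} = Set.univ := by
    refine Set.eq_univ_of_forall fun g ↦ ?_
    obtain ⟨t, ht, htg⟩ := hT (g • x)
    exact Set.mem_mul.2 ⟨t⁻¹, by simpa using ht, t * g, by simpa [mul_smul] using htg, by simp⟩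
  exact Set.infinite_univ (huniv ▸ T.finite_toSet.inv.mul hfin)

theorem scp [Infinite G] (hX : IsMinimalFlow G X) : SCP G X := by
  classical
  intro D hD U hU ⟨x, hx⟩
  obtain ⟨A, hAU, hA⟩ := exists_finset_forall_exists_separated
    (Finset.mem_insert_self 1 (hD.inv.mul hD).toFinset)
    (hX.infinite_setOf_smul_mem hU ⟨x, hx⟩ x)
  obtain ⟨M, hM⟩ := hX.exists_finset_forall_exists_smul_mem
    (isOpen_biInter_finset fun a (_ : a ∈ A) ↦ hU.preimage (continuous_const_smul a))
    ⟨x, Set.mem_iInter₂.2 hAU⟩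
  obtain ⟨S, hS, hSM⟩ := hA M
  refine ⟨S, fun g hg h hh hgh ↦ Set.disjoint_left.2 fun k hkg hkh ↦ hgh ?_, fun y ↦ ?_⟩
  · simp only [Set.mul_singleton, Set.mem_image] at hkg hkh
    obtain ⟨d, hd, rfl⟩ := hkg
    obtain ⟨d', hd', hdd'⟩ := hkh
    have hhg : h = d'⁻¹ * d * g := by rw [mul_assoc, ← hdd', inv_mul_cancel_left]
    have hone := hS g hg (d'⁻¹ * d)
      (Finset.mem_insert_of_mem (hD.inv.mul hD |>.mem_toFinset.2
        (Set.mul_mem_mul (Set.inv_mem_inv.2 hd') hd))) (hhg ▸ hh)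
    rw [hhg, hone, one_mul]
  · obtain ⟨m, hm, hmy⟩ := hM y
    obtain ⟨a, ha, ham⟩ := hSM m hm
    exact ⟨a * m, ham, by simpa [mul_smul] using Set.mem_iInter₂.1 hmy a ha⟩

end IsMinimalFlow

end Flow

end SeparatedCovering

section Subshift

variable {G ι κ : Type*}

/-- The configurations that show the pattern of `q` on the set `K` of sites. -/
def patternSet (K : Set (G × ι)) (q : G → ι → κ) : Set (G → ι → κ) :=
  {y | ∀ k ∈ K, y k.1 k.2 = q k.1 k.2}

theorem isClosed_patternSet [TopologicalSpace κ] [T1Space κ] (K : Set (G × ι)) (q : G → ι → κ) :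
    IsClosed (patternSet K q) := by
  simp only [patternSet, Set.ofPred_forall]
  exact isClosed_biInter fun k _ ↦ isClosed_singleton.preimage (continuous_apply_apply k.1 k.2)

theorem exists_patternSet_subset [TopologicalSpace κ] {O : Set (G → ι → κ)} (hO : IsOpen O)
    {p : G → ι → κ} (hp : p ∈ O) : ∃ K : Set (G × ι), K.Finite ∧ patternSet K p ⊆ O := by
  obtain ⟨I, u, hu, huO⟩ := isOpen_pi_iff.1 hO p hp
  choose! J v hv hvu using fun a ha ↦ isOpen_pi_iff.1 (hu a ha).1 (p a) (hu a ha).2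
  refine ⟨⋃ a ∈ I, Prod.mk a '' J a, I.finite_toSet.biUnion fun a _ ↦ (J a).finite_toSet.image _,
    fun y hy ↦ huO fun a ha ↦ hvu a ha fun i hi ↦ ?_⟩
  rw [hy (a, i) (Set.mem_biUnion ha (Set.mem_image_of_mem _ hi))]
  exact (hv a ha i hi).2

variable [Group G]

theorem shift_smul_apply {A : Type*} (g : G) (y : G → A) (h : G) : (g • y) h = y (h * g) :=
  rfl

instance shiftContinuousConstSMul {A : Type*} [TopologicalSpace A] :
    ContinuousConstSMul G (G → A) :=
  ⟨fun g ↦ continuous_pi fun h ↦ continuous_apply (h * g)⟩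

/-- For `D : ι → ι → Set G`, the sites `(u, i)` and `(v, j)` of `G × ι` are linked if
`v * u⁻¹ ∈ D i j`; this relation is invariant under right translation. -/
def Linked (D : ι → ι → Set G) (w w' : G × ι) : Prop :=
  w'.1 * w.1⁻¹ ∈ D w.2 w'.2

/-- `D` is a gluing gauge for `Y` if members of `Y` can be glued along `D`-unlinked regions:
whenever distinct `z` have unlinked regions `W z ⊆ G × ι`, some member of `Y` agrees with each `z`
on `W z`. -/
def IsGluingGauge (Y : Set (G → ι → κ)) (D : ι → ι → Set G) : Prop :=
  ∀ W : (G → ι → κ) → Set (G × ι), (∀ z, ∀ w ∈ W z, z ∈ Y) →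
    (∀ z, ∀ w ∈ W z, ∀ z', ∀ w' ∈ W z', Linked D w w' → z = z') →
    ∃ y ∈ Y, ∀ z, ∀ w ∈ W z, y w.1 w.2 = z w.1 w.2

theorem IsGluingGauge.mono {Y : Set (G → ι → κ)} {D D' : ι → ι → Set G} (hD : IsGluingGauge Y D)
    (h : ∀ i j, D i j ⊆ D' i j) : IsGluingGauge Y D' :=
  fun W hWY hW ↦ hD W hWY fun z w hw z' w' hw' hlink ↦ hW z w hw z' w' hw' (h _ _ hlink)

/-- A strongly irreducible subshift: a closed, shift-invariant set of configurations `G → ι → κ`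
with a gluing gauge made of finite sets. For infinite `ι` the gauge is not required to be bounded,
so this is an inverse limit of the usual notion over finite alphabets. -/
structure IsIrreducibleSubshift [TopologicalSpace κ] (Y : Set (G → ι → κ)) : Prop where
  isClosed : IsClosed Y
  smul_mem : ∀ g : G, ∀ y ∈ Y, g • y ∈ Y
  exists_gauge : ∃ D : ι → ι → Set G, (∀ i j, (D i j).Finite) ∧ IsGluingGauge Y D

namespace IsIrreducibleSubshift

variable [TopologicalSpace κ] {Y : Set (G → ι → κ)}

theorem nonempty (hY : IsIrreducibleSubshift Y) : Y.Nonempty := by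
  obtain ⟨D, -, hD⟩ := hY.exists_gauge
  obtain ⟨y, hy, -⟩ := hD (fun _ ↦ ∅) (by simp) (by simp)
  exact ⟨y, hy⟩

theorem exists_symmetric_gauge (hY : IsIrreducibleSubshift Y) :
    ∃ D : ι → ι → Set G, (∀ i j, (D i j).Finite) ∧ IsGluingGauge Y D ∧
      ∀ w w', Linked D w w' → Linked D w' w := by
  obtain ⟨D, hfin, hD⟩ := hY.exists_gauge
  refine ⟨fun i j ↦ D i j ∪ (D j i)⁻¹, fun i j ↦ (hfin i j).union (hfin j i).inv,
    hD.mono fun i j ↦ Set.subset_union_left, fun w w' h ↦ ?_⟩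
  simpa [Linked, or_comm] using h

end IsIrreducibleSubshift

/-- The set of `g` for which some site of `K` is linked to some site of the translate of `L`
by `g`. -/
def links (D : ι → ι → Set G) (K L : Set (G × ι)) : Set G :=
  {g | ∃ k ∈ K, ∃ l ∈ L, Linked D k (l.1 * g, l.2)}

theorem finite_links {D : ι → ι → Set G} (hD : ∀ i j, (D i j).Finite) {K L : Set (G × ι)}
    (hK : K.Finite) (hL : L.Finite) : (links D K L).Finite := by
  have : links D K L = ⋃ k ∈ K, ⋃ l ∈ L, (fun g ↦ l.1 * g * k.1⁻¹) ⁻¹' D k.2 l.2 := by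
    ext g; simp [links, Linked]
  rw [this]
  refine hK.biUnion fun k _ ↦ hL.biUnion fun l _ ↦ (hD k.2 l.2).preimage fun a _ b _ h ↦ ?_
  simpa using h

theorem inv_mem_links {D : ι → ι → Set G} (hD : ∀ w w', Linked D w w' → Linked D w' w)
    {K L : Set (G × ι)} {g : G} (hg : g ∈ links D K L) : g⁻¹ ∈ links D L K := by
  obtain ⟨k, hk, l, hl, h⟩ := hg
  refine ⟨l, hl, k, hk, ?_⟩
  have := hD _ _ h
  simpa [Linked, mul_assoc] using this

theorem mul_inv_mem_links {D : ι → ι → Set G} {K L : Set (G × ι)} {k l : G × ι} (hk : k ∈ K)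
    (hl : l ∈ L) {g h : G} (hlink : Linked D (k.1 * g, k.2) (l.1 * h, l.2)) :
    h * g⁻¹ ∈ links D K L :=
  ⟨k, hk, l, hl, by simpa [Linked, mul_assoc] using hlink⟩

/-- The configurations in `Y` whose orbit visits `P` syndetically, with return times
controlled by `E`. -/
def returningTo (Y : Set (G → ι → κ)) (E : Set G) (P : Set (G → ι → κ)) : Set (G → ι → κ) :=
  {y ∈ Y | ∀ h : G, ∃ e ∈ E, (e * h) • y ∈ P}

theorem isClosed_returningTo [TopologicalSpace κ] {Y P : Set (G → ι → κ)} (hY : IsClosed Y)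
    (hP : IsClosed P) {E : Set G} (hE : E.Finite) : IsClosed (returningTo Y E P) := by
  have : returningTo Y E P = Y ∩ ⋂ h : G, ⋃ e ∈ E, (fun y ↦ (e * h) • y) ⁻¹' P := by
    ext y; simp [returningTo]
  rw [this]
  exact hY.inter <| isClosed_iInter fun h ↦ hE.isClosed_biUnion fun e _ ↦
    hP.preimage (continuous_const_smul (e * h))

theorem smul_mem_returningTo {Y P : Set (G → ι → κ)} (hY : ∀ g : G, ∀ y ∈ Y, g • y ∈ Y) {E : Set G}
    (g : G) {y : G → ι → κ} (hy : y ∈ returningTo Y E P) : g • y ∈ returningTo Y E P :=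
  ⟨hY g y hy.1, fun h ↦ by simpa [mul_assoc, smul_smul] using hy.2 (h * g)⟩

theorem exists_maximal_separated {E : Set G} (h1 : 1 ∈ E) (hE : ∀ e ∈ E, e⁻¹ ∈ E) (F : Set G) :
    ∃ C ⊆ F, (∀ c ∈ C, ∀ c' ∈ C, c' * c⁻¹ ∈ E → c = c') ∧ ∀ h ∈ F, ∃ c ∈ C, c * h⁻¹ ∈ E := by
  obtain ⟨C, hC⟩ : ∃ C, Maximal (· ∈ {C | C ⊆ F ∧ ∀ c ∈ C, ∀ c' ∈ C, c' * c⁻¹ ∈ E → c = c'}) C := by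
    refine zorn_subset _ fun K hK hchain ↦ ⟨⋃₀ K, ⟨Set.sUnion_subset fun s hs ↦ (hK hs).1, ?_⟩,
      fun s ↦ Set.subset_sUnion_of_mem⟩
    rintro c ⟨s, hs, hcs⟩ c' ⟨t, ht, hct⟩
    obtain ⟨r, hr, hsr, htr⟩ := hchain.directedOn s hs t ht
    exact (hK hr).2 c (hsr hcs) c' (htr hct)
  refine ⟨C, hC.prop.1, hC.prop.2, fun h hh ↦ ?_⟩
  by_contra! hfar
  refine hfar h (hC.mem_of_prop_insert ⟨Set.insert_subset hh hC.prop.1, ?_⟩) (by simpa)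
  rintro c (rfl | hc) c' (rfl | hc') hE'
  · rfl
  · exact (hfar c' hc' hE').elim
  · exact (hfar c hc (by simpa using hE _ hE')).elim
  · exact hC.prop.2 c hc c' hc' hE'

theorem exists_covering_extension {Z : Type*} {E : Set G} (h1 : 1 ∈ E) (hE : ∀ e ∈ E, e⁻¹ ∈ E)
    (f : G → Z) {T₀ : Z → Set G}
    (hT₀ : ∀ z, ∀ c ∈ T₀ z, ∀ z', ∀ c' ∈ T₀ z', c' * c⁻¹ ∈ E → z = z') :
    ∃ T : Z → Set G, (∀ z, ∀ c ∈ T z, ∀ z', ∀ c' ∈ T z', c' * c⁻¹ ∈ E → z = z') ∧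
      (∀ z, ∀ c ∈ T z, c ∈ T₀ z ∨ z = f c ∧ ∀ z', ∀ c' ∈ T₀ z', c * c'⁻¹ ∉ E) ∧
      ∀ h, ∃ z, ∃ c ∈ T z, c * h⁻¹ ∈ E := by
  obtain ⟨C, hCF, hC, hcover⟩ := exists_maximal_separated h1 hE
    {h | ∀ z, ∀ c ∈ T₀ z, h * c⁻¹ ∉ E}
  refine ⟨fun z ↦ T₀ z ∪ {c ∈ C | z = f c}, ?_, ?_, fun h ↦ ?_⟩
  · rintro z c (hc | ⟨hc, rfl⟩) z' c' (hc' | ⟨hc', rfl⟩) hE'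
    · exact hT₀ z c hc z' c' hc' hE'
    · exact (hCF hc' z c hc hE').elim
    · exact (hCF hc z' c' hc' (by simpa using hE _ hE')).elim
    · rw [hC c hc c' hc' hE']
  · rintro z c (hc | ⟨hc, rfl⟩)
    · exact Or.inl hc
    · exact Or.inr ⟨rfl, hCF hc⟩
  · by_cases hh : ∀ z, ∀ c ∈ T₀ z, h * c⁻¹ ∉ E
    · obtain ⟨c, hc, hch⟩ := hcover h hh
      exact ⟨f c, c, Or.inr ⟨hc, rfl⟩, hch⟩
    · push Not at hh
      obtain ⟨z, c, hc, hch⟩ := hh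
      exact ⟨z, c, Or.inl hc, by simpa using hE _ hch⟩

namespace IsGluingGauge

variable {Y : Set (G → ι → κ)} {D : ι → ι → Set G} {K : Set (G × ι)}

theorem exists_patternSet_of_centers (hD : IsGluingGauge Y D)
    (hsymm : ∀ w w', Linked D w w' → Linked D w' w) {W : (G → ι → κ) → Set (G × ι)}
    (hWY : ∀ z, ∀ w ∈ W z, z ∈ Y)
    (hW : ∀ z, ∀ w ∈ W z, ∀ z', ∀ w' ∈ W z', Linked D w w' → z = z')
    {T : (G → ι → κ) → Set G} (hTY : ∀ z, ∀ c ∈ T z, z ∈ Y)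
    (hT : ∀ z, ∀ c ∈ T z, ∀ z', ∀ c' ∈ T z', c' * c⁻¹ ∈ links D K K → z = z')
    (hWT : ∀ z, ∀ w ∈ W z, ∀ z', ∀ c ∈ T z', c * w.1⁻¹ ∈ links D {(1, w.2)} K → z = z') :
    ∃ y ∈ Y, (∀ z, ∀ w ∈ W z, y w.1 w.2 = z w.1 w.2) ∧
      ∀ z, ∀ c ∈ T z, c • y ∈ patternSet K (c • z) := by
  have hWT' {z w} (hw : w ∈ W z) {z' c} (hc : c ∈ T z') {k : G × ι} (hk : k ∈ K)
      (h : Linked D w (k.1 * c, k.2)) : z = z' :=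
    hWT z w hw z' c hc (mul_inv_mem_links (Set.mem_singleton _) hk (by simpa using h))
  let V : (G → ι → κ) → Set (G × ι) := fun z ↦ W z ∪ {w | ∃ c ∈ T z, ∃ k ∈ K, w = (k.1 * c, k.2)}
  have hVY : ∀ z, ∀ w ∈ V z, z ∈ Y := by
    rintro z w (hw | ⟨c, hc, -⟩)
    · exact hWY z w hw
    · exact hTY z c hc
  have hV : ∀ z, ∀ w ∈ V z, ∀ z', ∀ w' ∈ V z', Linked D w w' → z = z' := by
    rintro z w (hw | ⟨c, hc, k, hk, rfl⟩) z' w' (hw' | ⟨c', hc', k', hk', rfl⟩) hlink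
    · exact hW z w hw z' w' hw' hlink
    · exact hWT' hw hc' hk' hlink
    · exact (hWT' hw' hc hk (hsymm _ _ hlink)).symm
    · exact hT z c hc z' c' hc' (mul_inv_mem_links hk hk' hlink)
  obtain ⟨y, hy, hyV⟩ := hD V hVY hV
  exact ⟨y, hy, fun z w hw ↦ hyV z w (Or.inl hw),
    fun z c hc k hk ↦ hyV z (k.1 * c, k.2) (Or.inr ⟨c, hc, k, hk, rfl⟩)⟩

/- Keep the occurrences of the pattern in `z` which are close to `W z`, and fill in copies of the
pattern from `q` at a maximal separated set of places far from all the kept ones. -/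
theorem returningTo (hD : IsGluingGauge Y D) (hsymm : ∀ w w', Linked D w w' → Linked D w' w)
    (hY : ∀ g : G, ∀ y ∈ Y, g • y ∈ Y) {q : G → ι → κ} (hq : q ∈ Y) {E : Set G} (h1 : 1 ∈ E)
    (hE : ∀ e ∈ E, e⁻¹ ∈ E) (hKE : links D K K ⊆ E) :
    IsGluingGauge (returningTo Y E (patternSet K q)) fun i j ↦
      D i j ∪ (E * links D {(1, j)} K)⁻¹ * E * (E * links D {(1, i)} K) := by
  intro W hWY hW
  have hnear {z w z' w'} (hw : w ∈ W z) (hw' : w' ∈ W z') {c c' : G}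
      (hc : c * w.1⁻¹ ∈ E * links D {(1, w.2)} K)
      (hc' : c' * w'.1⁻¹ ∈ E * links D {(1, w'.2)} K) (hcc' : c' * c⁻¹ ∈ E) : z = z' := by
    refine hW z w hw z' w' hw' (Or.inr ?_)
    have hmul := Set.mul_mem_mul (Set.mul_mem_mul (Set.inv_mem_inv.2 hc') hcc') hc
    simpa [mul_assoc] using hmul
  obtain ⟨T, hT, hTW, hcover⟩ := exists_covering_extension h1 hE (fun c ↦ c⁻¹ • q)
    (T₀ := fun z ↦ {c | c • z ∈ patternSet K q ∧
      ∃ w ∈ W z, c * w.1⁻¹ ∈ E * links D {(1, w.2)} K})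
    (fun z c ⟨_, w, hw, hcw⟩ z' c' ⟨_, w', hw', hcw'⟩ ↦ hnear hw hw' hcw hcw')
  have hTY : ∀ z, ∀ c ∈ T z, z ∈ Y ∧ c • z ∈ patternSet K q := fun z c hc ↦ by
    obtain ⟨hP, w, hw, -⟩ | ⟨rfl, -⟩ := hTW z c hc
    · exact ⟨(hWY z w hw).1, hP⟩
    · exact ⟨hY _ q hq, by rw [smul_inv_smul]; exact fun _ _ ↦ rfl⟩
  have hWT : ∀ z, ∀ w ∈ W z, ∀ z', ∀ c ∈ T z', c * w.1⁻¹ ∈ links D {(1, w.2)} K → z = z' := by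
    intro z w hw z' c hc hcw
    obtain ⟨-, w', hw', hcw'⟩ | ⟨-, hfar⟩ := hTW z' c hc
    · refine hnear hw hw' (c := c) ?_ hcw' (by simpa using h1)
      simpa using Set.mul_mem_mul h1 hcw
    · obtain ⟨e, he, hP⟩ := (hWY z w hw).2 c
      refine (hfar z (e * c) ⟨hP, w, hw, ?_⟩ (by simpa using hE e he)).elim
      rw [mul_assoc]
      exact Set.mul_mem_mul he hcw
  obtain ⟨y, hy, hyW, hyT⟩ := hD.exists_patternSet_of_centers hsymm
    (fun z w hw ↦ (hWY z w hw).1) (fun z w hw z' w' hw' h ↦ hW z w hw z' w' hw' (Or.inl h))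
    (fun z c hc ↦ (hTY z c hc).1)
    (fun z c hc z' c' hc' h ↦ hT z c hc z' c' hc' (hKE h)) hWT
  refine ⟨y, ⟨hy, fun h ↦ ?_⟩, hyW⟩
  obtain ⟨z, c, hc, hch⟩ := hcover h
  refine ⟨c * h⁻¹, hch, fun k hk ↦ ?_⟩
  rw [inv_mul_cancel_right, hyT z c hc k hk, (hTY z c hc).2 k hk]

end IsGluingGauge

namespace IsGluingGauge

variable {Y : Set (G → ι → κ)} {D : ι → ι → Set G} {K : Set (G × ι)}

theorem exists_forall_smul_mem_patternSet (hD : IsGluingGauge Y D)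
    (hsymm : ∀ w w', Linked D w w' → Linked D w' w) (hY : ∀ g : G, ∀ y ∈ Y, g • y ∈ Y)
    {p : G → ι → κ} (hp : p ∈ Y) {S : Set G}
    (hS : ∀ s ∈ S, ∀ s' ∈ S, s' * s⁻¹ ∈ links D K K → s = s') :
    ∃ q ∈ Y, ∀ s ∈ S, s • q ∈ patternSet K p := by
  let T : (G → ι → κ) → Set G := fun z ↦ {s ∈ S | z = s⁻¹ • p}
  have hTY : ∀ z, ∀ s ∈ T z, z ∈ Y := by
    rintro _ s ⟨-, rfl⟩
    exact hY _ p hp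
  have hT : ∀ z, ∀ s ∈ T z, ∀ z', ∀ s' ∈ T z', s' * s⁻¹ ∈ links D K K → z = z' := by
    rintro _ s ⟨hs, rfl⟩ _ s' ⟨hs', rfl⟩ hss'
    rw [hS s hs s' hs' hss']
  obtain ⟨q, hq, -, hqT⟩ := hD.exists_patternSet_of_centers hsymm (W := fun _ ↦ ∅) (by simp)
    (by simp) hTY hT (by simp)
  refine ⟨q, hq, fun s hs ↦ ?_⟩
  simpa only [smul_inv_smul] using hqT _ s ⟨hs, rfl⟩

end IsGluingGauge

theorem SCP.exists_finset_separated {X : Type*} [TopologicalSpace X] [CompactSpace X]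
    [MulAction G X] [ContinuousConstSMul G X] (hX : SCP G X) {E : Set G} (hE : E.Finite)
    {U : Set X} (hU : IsOpen U) (hUne : U.Nonempty) :
    ∃ S : Finset G, (∀ s ∈ S, ∀ s' ∈ S, s' * s⁻¹ ∈ E → s = s') ∧ ∀ x : X, ∃ s ∈ S, s • x ∈ U := by
  obtain ⟨S, hS, hSU⟩ := hX (insert 1 E) (hE.insert 1) U hU hUne
  obtain ⟨T, hTS, hT⟩ := exists_finset_subset_forall_exists_smul_mem hU hSU
  refine ⟨T, fun s hs s' hs' hE' ↦ ?_, hT⟩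
  by_contra hne
  have hdisj := hS s (hTS hs) s' (hTS hs') hne
  have hmem : s' ∈ insert 1 E * ({s} : Set G) :=
    Set.mem_mul.2 ⟨s' * s⁻¹, Or.inr hE', s, rfl, inv_mul_cancel_right s' s⟩
  have hmem' : s' ∈ insert 1 E * ({s'} : Set G) :=
    Set.mem_mul.2 ⟨1, Or.inl rfl, s', rfl, one_mul s'⟩
  exact Set.disjoint_left.1 hdisj hmem hmem'

namespace IsIrreducibleSubshift

variable [TopologicalSpace κ] [T1Space κ] {Y : Set (G → ι → κ)}

theorem returningTo (hY : IsIrreducibleSubshift Y) {D : ι → ι → Set G}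
    (hDfin : ∀ i j, (D i j).Finite) (hD : IsGluingGauge Y D)
    (hsymm : ∀ w w', Linked D w w' → Linked D w' w) {K : Set (G × ι)} (hK : K.Finite)
    {q : G → ι → κ} (hq : q ∈ Y) {E : Set G} (hEfin : E.Finite) (h1 : 1 ∈ E)
    (hE : ∀ e ∈ E, e⁻¹ ∈ E) (hKE : links D K K ⊆ E) :
    IsIrreducibleSubshift (returningTo Y E (patternSet K q)) where
  isClosed := isClosed_returningTo hY.isClosed (isClosed_patternSet K q) hEfin
  smul_mem g _ hy := smul_mem_returningTo hY.smul_mem g hy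
  exists_gauge := by
    have hN (i : ι) : (E * links D {(1, i)} K).Finite :=
      hEfin.mul (finite_links hDfin (Set.finite_singleton _) hK)
    exact ⟨_, fun i j ↦ (hDfin i j).union (((hN j).inv.mul hEfin).mul (hN i)),
      hD.returningTo hsymm hY.smul_mem hq h1 hE hKE⟩

theorem exists_subset_forall_exists_smul_mem {X : Type*} [TopologicalSpace X] [CompactSpace X]
    [MulAction G X] [ContinuousConstSMul G X] (hX : SCP G X) (hY : IsIrreducibleSubshift Y)
    {U : Set X} (hU : IsOpen U) (hUne : U.Nonempty) {O : Set (G → ι → κ)} (hO : IsOpen O)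
    (hYO : (Y ∩ O).Nonempty) :
    ∃ Y' ⊆ Y, IsIrreducibleSubshift Y' ∧ ∀ y ∈ Y', ∀ x : X, ∃ g : G, g • x ∈ U ∧ g • y ∈ O := by
  obtain ⟨p, hpY, hpO⟩ := hYO
  obtain ⟨K, hK, hKO⟩ := exists_patternSet_subset hO hpO
  obtain ⟨D, hDfin, hD, hsymm⟩ := hY.exists_symmetric_gauge
  obtain ⟨S, hS, hSU⟩ := hX.exists_finset_separated (finite_links hDfin hK hK) hU hUne
  obtain ⟨q, hq, hqS⟩ := hD.exists_forall_smul_mem_patternSet hsymm hY.smul_mem hpY (S := S) hS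
  let K' : Set (G × ι) := Set.image2 (fun k s ↦ (k.1 * s, k.2)) K S
  have hK' : K'.Finite := hK.image2 _ S.finite_toSet
  refine ⟨_, fun y hy ↦ hy.1, hY.returningTo hDfin hD hsymm hK' hq
    ((finite_links hDfin hK' hK').insert 1) (Set.mem_insert _ _) ?_ (Set.subset_insert _ _), ?_⟩
  · rintro e (rfl | he)
    · simp
    · exact Or.inr (inv_mem_links hsymm he)
  · rintro y ⟨-, hy⟩ x
    obtain ⟨e, -, hye⟩ := hy 1
    rw [mul_one] at hye
    obtain ⟨s, hs, hsx⟩ := hSU (e • x)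
    refine ⟨s * e, by rwa [mul_smul], hKO fun k hk ↦ ?_⟩
    rw [mul_smul, shift_smul_apply, hye _ (Set.mem_image2_of_mem hk hs), ← hqS s hs k hk,
      shift_smul_apply]

end IsIrreducibleSubshift

end Subshift

section BaseSubshift

theorem exists_coloring_extending {V α : Type*} (Γ : SimpleGraph V)
    (hΓ : ∀ v, (Γ.neighborSet v).encard < ENat.card α) {W : Set V} {w : V → α}
    (hw : ∀ u ∈ W, ∀ v ∈ W, Γ.Adj u v → w u ≠ w v) :
    ∃ c : V → α, (∀ u ∈ W, c u = w u) ∧ ∀ u v, Γ.Adj u v → c u ≠ c v := by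
  classical
  have havoid (v : V) (f : V → α) : ∃ a, ∀ u, Γ.Adj v u → a ≠ f u := by
    by_contra! hall
    have huniv : f '' Γ.neighborSet v = Set.univ := Set.eq_univ_of_forall fun a ↦ by
      obtain ⟨u, hvu, rfl⟩ := hall a
      exact Set.mem_image_of_mem f hvu
    have hle := Set.encard_image_le f (Γ.neighborSet v)
    rw [huniv, Set.encard_univ] at hle
    exact (hΓ v).not_ge hle
  choose avoid havoid using havoid
  let c : V → α := IsWellFounded.fix WellOrderingRel fun v c ↦
    if v ∈ W then w v else avoid v fun u ↦ if h : WellOrderingRel u v then c u h else w u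
  have hc (v : V) : c v = if v ∈ W then w v else
      avoid v fun u ↦ if WellOrderingRel u v then c u else w u := by
    refine (IsWellFounded.fix_eq WellOrderingRel _ v).trans ?_
    simp only [dite_eq_ite]
    rfl
  have hcW : ∀ u ∈ W, c u = w u := fun u hu ↦ by rw [hc, if_pos hu]
  have hlater {u v : V} (hv : v ∉ W) (huv : Γ.Adj v u) (h : WellOrderingRel u v ∨ u ∈ W) :
      c v ≠ c u := by
    have hne := havoid v (fun u ↦ if WellOrderingRel u v then c u else w u) u huv
    rw [hc v, if_neg hv]
    convert hne using 1
    split_ifs with hlt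
    · rfl
    · exact hcW u (h.resolve_left hlt)
  refine ⟨c, hcW, fun u v huv ↦ ?_⟩
  by_cases hu : u ∈ W <;> by_cases hv : v ∈ W
  · rw [hcW u hu, hcW v hv]
    exact hw u hu v hv huv
  · exact (hlater hv huv.symm (Or.inr hu)).symm
  · exact hlater hu huv (Or.inr hv)
  · rcases trichotomous_of WellOrderingRel u v with h | rfl | h
    · exact (hlater hv huv.symm (Or.inl h)).symm
    · exact (huv.ne rfl).elim
    · exact hlater hu huv (Or.inl h)

variable {G : Type*} [Group G]

/-- The subshift of the configurations whose coordinate at each `g ≠ 1` is a proper 3-colouring of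
the graph on `G` joining `m` to `g * m`; such a configuration is fixed by no `g ≠ 1`. -/
def properColorings (G : Type*) [Group G] : Set (G → G → Fin 3) :=
  {y | ∀ g m : G, g ≠ 1 → y (g * m) g ≠ y m g}

theorem eq_one_of_smul_eq_of_mem_properColorings {y : G → G → Fin 3} (hy : y ∈ properColorings G)
    {g : G} (h : g • y = y) : g = 1 := by
  by_contra hg
  have hval : (g • y) 1 g = y 1 g := by rw [h]
  exact hy g 1 hg (by simpa only [shift_smul_apply, one_mul, mul_one] using hval)

theorem isClosed_properColorings : IsClosed (properColorings G) := by
  simp only [properColorings, Set.ofPred_forall]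
  refine isClosed_iInter fun g ↦ isClosed_iInter fun m ↦ isClosed_iInter fun _ ↦ ?_
  have hcont : Continuous fun y : G → G → Fin 3 ↦ (y (g * m) g, y m g) := by fun_prop
  exact (isClosed_discrete {a : Fin 3 × Fin 3 | a.1 ≠ a.2}).preimage hcont

theorem exists_translate_coloring_extending {g : G} (hg : g ≠ 1) {W : Set G} {w : G → Fin 3}
    (hw : ∀ m ∈ W, g * m ∈ W → w (g * m) ≠ w m) :
    ∃ c : G → Fin 3, (∀ m ∈ W, c m = w m) ∧ ∀ m, c (g * m) ≠ c m := by
  let Γ : SimpleGraph G := SimpleGraph.fromRel fun m m' ↦ m' = g * m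
  have hΓ (m : G) : (Γ.neighborSet m).encard < ENat.card (Fin 3) := by
    have hsub : Γ.neighborSet m ⊆ {g * m, g⁻¹ * m} := by
      rintro m' ⟨-, rfl | rfl⟩ <;> simp
    calc (Γ.neighborSet m).encard
      _ ≤ ({g⁻¹ * m} : Set G).encard + 1 :=
        (Set.encard_le_encard hsub).trans (Set.encard_insert_le _ _)
      _ < ENat.card (Fin 3) := by
        rw [Set.encard_singleton, ENat.card_eq_coe_fintype_card, Fintype.card_fin]
        norm_num
  obtain ⟨c, hcW, hc⟩ := exists_coloring_extending Γ hΓ (W := W) (w := w) (by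
    rintro u hu v hv ⟨-, rfl | rfl⟩
    · exact (hw u hu hv).symm
    · exact hw v hv hu)
  exact ⟨c, hcW, fun m ↦ (hc m (g * m) ⟨by simpa, Or.inl rfl⟩).symm⟩

theorem isGluingGauge_properColorings :
    IsGluingGauge (properColorings G) fun i j ↦ {g | i = j ∧ g ∈ ({1, i, i⁻¹} : Set G)} := by
  intro W hWY hW
  have hsource : ∀ w ∈ ⋃ z, W z, ∃ z, w ∈ W z := fun w ↦ Set.mem_iUnion.1
  choose! source hsource using hsource
  have hsource_eq {z w} (hw : w ∈ W z) : source w = z :=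
    hW _ w (hsource w (Set.mem_iUnion_of_mem z hw)) z w hw ⟨rfl, by simp⟩
  let paint (g m : G) : Fin 3 := source (m, g) m g
  have hpaint {z g m} (hm : (m, g) ∈ W z) : paint g m = z m g := by
    simp only [paint, hsource_eq hm]
  have hproper {g : G} (hg : g ≠ 1) (m : G) (hm : (m, g) ∈ ⋃ z, W z)
      (hgm : (g * m, g) ∈ ⋃ z, W z) : paint g (g * m) ≠ paint g m := by
    have heq := hW _ _ (hsource _ hm) _ _ (hsource _ hgm) ⟨rfl, by simp⟩
    simp only [paint, ← heq]
    exact hWY _ _ (hsource _ hm) g m hg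
  have hcolor (g : G) : ∃ c : G → Fin 3, (∀ z m, (m, g) ∈ W z → c m = z m g) ∧
      (g ≠ 1 → ∀ m, c (g * m) ≠ c m) := by
    by_cases hg : g = 1
    · exact ⟨paint g, fun z m hm ↦ hpaint hm, fun h ↦ (h hg).elim⟩
    · obtain ⟨c, hcW, hc⟩ := exists_translate_coloring_extending hg
        (W := {m | (m, g) ∈ ⋃ z, W z}) (hproper hg)
      exact ⟨c, fun z m hm ↦ (hcW m (Set.mem_iUnion_of_mem z hm)).trans (hpaint hm), fun _ ↦ hc⟩
  choose c hcW hc using hcolor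
  exact ⟨fun m g ↦ c g m, fun g m hg ↦ hc g hg m, fun z w hw ↦ hcW w.2 z w.1 hw⟩

theorem isIrreducibleSubshift_properColorings : IsIrreducibleSubshift (properColorings G) where
  isClosed := isClosed_properColorings
  smul_mem k y hy g m hg := by
    rw [shift_smul_apply, shift_smul_apply, mul_assoc]
    exact hy g (m * k) hg
  exists_gauge := ⟨_, fun i j ↦ Set.Finite.subset (Set.toFinite _) fun _ h ↦ h.2,
    isGluingGauge_properColorings⟩

end BaseSubshift

section Genericity

/-- A π-base: a family of nonempty open sets such that every nonempty open set contains one of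
them. -/
structure IsPiBase {X : Type*} [TopologicalSpace X] (B : Set (Set X)) : Prop where
  isOpen : ∀ V ∈ B, IsOpen V
  nonempty : ∀ V ∈ B, V.Nonempty
  exists_subset : ∀ U : Set X, IsOpen U → U.Nonempty → ∃ V ∈ B, V ⊆ U

theorem isPiBase_countableBasis (X : Type*) [TopologicalSpace X] [SecondCountableTopology X] :
    IsPiBase (TopologicalSpace.countableBasis X) where
  isOpen _ := TopologicalSpace.isOpen_of_mem_countableBasis
  nonempty _ := TopologicalSpace.nonempty_of_mem_countableBasis
  exists_subset U hU := fun ⟨x, hx⟩ ↦ by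
    obtain ⟨V, hV, -, hVU⟩ :=
      (TopologicalSpace.isBasis_countableBasis X).exists_subset_of_mem_open hx hU
    exact ⟨V, hV, hVU⟩

namespace IsIrreducibleSubshift

variable {G ι κ X : Type*} [Group G] [TopologicalSpace κ] [T1Space κ] [TopologicalSpace X]
  [CompactSpace X] [MulAction G X] [ContinuousConstSMul G X]

theorem isCofinal_forall_exists_smul_mem (hX : SCP G X) {U : Set X} (hU : IsOpen U)
    (hUne : U.Nonempty) {O : Set (G → ι → κ)} (hO : IsOpen O) :
    IsCofinal {Y : {Y : Set (G → ι → κ) // IsIrreducibleSubshift Y}ᵒᵈ |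
      (Y.ofDual.1 ∩ O).Nonempty → ∀ y ∈ Y.ofDual.1, ∀ x : X, ∃ g : G, g • x ∈ U ∧ g • y ∈ O} := by
  rintro ⟨Y, hY⟩
  by_cases hYO : (Y ∩ O).Nonempty
  · obtain ⟨Y', hY'Y, hY', h⟩ := hY.exists_subset_forall_exists_smul_mem hX hU hUne hO hYO
    exact ⟨OrderDual.toDual ⟨Y', hY'⟩, fun _ ↦ h, hY'Y⟩
  · exact ⟨OrderDual.toDual ⟨Y, hY⟩, fun h ↦ (hYO h).elim, le_rfl⟩

/- The Rasiowa–Sikorski lemma, applied to the irreducible subshifts ordered by reverse inclusion. -/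
theorem exists_subMulAction_isMinimalFlow_prod [Countable G] [Countable ι] [CompactSpace κ]
    [SecondCountableTopology κ] (hX : SCP G X) {B : Set (Set X)} (hBc : B.Countable)
    (hB : IsPiBase B) {Y : Set (G → ι → κ)} (hY : IsIrreducibleSubshift Y) :
    ∃ Z : SubMulAction G (G → ι → κ), ↑Z ⊆ Y ∧ IsClosed (Z : Set (G → ι → κ)) ∧ Nonempty Z ∧
      IsMinimalFlow G (X × Z) := by
  let B' := TopologicalSpace.countableBasis (G → ι → κ)
  have := hBc.to_subtype
  let _ := Encodable.ofCountable (B × B')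
  let 𝒟 (UO : B × B') : Order.Cofinal {Y : Set (G → ι → κ) // IsIrreducibleSubshift Y}ᵒᵈ :=
    ⟨_, isCofinal_forall_exists_smul_mem hX (hB.isOpen _ UO.1.2) (hB.nonempty _ UO.1.2)
      (TopologicalSpace.isOpen_of_mem_countableBasis UO.2.2)⟩
  let Ys (n : ℕ) := (Order.sequenceOfCofinals (OrderDual.toDual ⟨Y, hY⟩) 𝒟 n).ofDual
  have hYs : Antitone Ys := Order.sequenceOfCofinals.monotone _ 𝒟
  have hne : (⋂ n, (Ys n).1).Nonempty :=
    IsCompact.nonempty_iInter_of_sequence_nonempty_isCompact_isClosed _ (fun n ↦ hYs n.le_succ)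
      (fun n ↦ (Ys n).2.nonempty) (Ys 0).2.isClosed.isCompact fun n ↦ (Ys n).2.isClosed
  let Z : SubMulAction G (G → ι → κ) :=
    ⟨⋂ n, (Ys n).1, fun g {_} hz ↦
      Set.mem_iInter.2 fun n ↦ (Ys n).2.smul_mem g _ (Set.mem_iInter.1 hz n)⟩
  refine ⟨Z, Set.iInter_subset _ 0, isClosed_iInter fun n ↦ (Ys n).2.isClosed, hne.to_subtype,
    fun ⟨x, z⟩ ↦ dense_iff_inter_open.2 fun N hN ⟨⟨x₀, z₀⟩, h₀⟩ ↦ ?_⟩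
  obtain ⟨U, N', hU, hN', hx₀, hz₀, hUN'⟩ := isOpen_prod_iff.1 hN x₀ z₀ h₀
  obtain ⟨V, hV, hVU⟩ := hB.exists_subset U hU ⟨x₀, hx₀⟩
  obtain ⟨O, hO, rfl⟩ := isOpen_induced_iff.1 hN'
  obtain ⟨O', hO', hz₀O', hO'O⟩ :=
    (TopologicalSpace.isBasis_countableBasis (G → ι → κ)).exists_subset_of_mem_open hz₀ hO
  obtain ⟨g, hgx, hgz⟩ := Order.sequenceOfCofinals.encode_mem (OrderDual.toDual ⟨Y, hY⟩) 𝒟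
    (⟨V, hV⟩, ⟨O', hO'⟩) ⟨z₀, Set.mem_iInter.1 z₀.2 _, hz₀O'⟩ z (Set.mem_iInter.1 z.2 _) x
  exact ⟨g • (x, z), hUN' (Set.mk_mem_prod (hVU hgx) (hO'O hgz)), g, rfl⟩

end IsIrreducibleSubshift

end Genericity

section Disjointness

variable {G X Y : Type*} [Group G] [TopologicalSpace X] [MulAction G X] [TopologicalSpace Y]
  [MulAction G Y]

theorem IsMinimalFlow.of_surjective (hX : IsMinimalFlow G X) {f : X →[G] Y} (hf : Continuous f)
    (hsurj : Function.Surjective f) : IsMinimalFlow G Y := by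
  intro y
  obtain ⟨x, rfl⟩ := hsurj y
  refine (hsurj.denseRange.dense_image hf (hX x)).mono ?_
  rintro _ ⟨_, ⟨g, rfl⟩, rfl⟩
  exact ⟨g, (map_smul f g x).symm⟩

theorem FlowsDisjoint.of_isMinimalFlow_prod (h : IsMinimalFlow G (X × Y)) :
    FlowsDisjoint G X Y := by
  intro J hJ hinv hfst _
  refine Set.eq_univ_of_forall fun q ↦ ?_
  obtain ⟨p, hp, -⟩ : q.1 ∈ Prod.fst '' J := hfst ▸ Set.mem_univ q.1
  have horbit : MulAction.orbit G p ⊆ J := Set.range_subset_iff.2 fun g ↦ hinv g p hp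
  exact closure_minimal horbit hJ (h p q)

end Disjointness

theorem exists_free_minimal_flow_disjoint_from_general
    {G : Type u} [Group G] [Countable G] [Infinite G]
    (X : Type v) [TopologicalSpace X] [CompactSpace X] [Nonempty X]
    [MulAction G X] [ContinuousConstSMul G X]
    (hXmin : IsMinimalFlow G X) {B : Set (Set X)} (hBc : B.Countable) (hB : IsPiBase B) :
    ∃ Y : GFlow G,
      CompactSpace Y.carrier ∧ T2Space Y.carrier ∧ Nonempty Y.carrier ∧
      TopologicalSpace.MetrizableSpace Y.carrier ∧ ContinuousConstSMul G Y.carrier ∧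
      IsMinimalFlow G Y.carrier ∧
      (∀ (g : G) (y : Y.carrier), g • y = y → g = 1) ∧
      FlowsDisjoint G X Y.carrier := by
  obtain ⟨Z, hZ, hZclosed, hZne, hXZ⟩ := isIrreducibleSubshift_properColorings
    |>.exists_subMulAction_isMinimalFlow_prod hXmin.scp hBc hB
  have := TopologicalSpace.metrizableSpace_of_t3_secondCountable (G → G → Fin 3)
  refine ⟨⟨Z⟩, isCompact_iff_compactSpace.1 hZclosed.isCompact, inferInstanceAs (T2Space Z), hZne,
    Topology.IsEmbedding.subtypeVal.metrizableSpace,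
    ⟨fun g ↦ ((continuous_const_smul g).comp continuous_subtype_val).subtype_mk _⟩,
    hXZ.of_surjective (f := ⟨Prod.snd, fun _ _ ↦ rfl⟩) continuous_snd Prod.snd_surjective,
    fun g z hgz ↦ eq_one_of_smul_eq_of_mem_properColorings (hZ z.2) (congrArg Subtype.val hgz),
    FlowsDisjoint.of_isMinimalFlow_prod hXZ⟩

/-- Let `G` be a countable, infinite discrete group and `X` a metrizable,
minimal `G`-flow.  Then there exists a minimal, metrizable, free `G`-flow `Y` disjoint
from `X`. -/
theorem exists_free_minimal_flow_disjoint_from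
    {G : Type u} [Group G] [Countable G] [Infinite G]
    (X : Type v) [TopologicalSpace X] [CompactSpace X] [T2Space X] [Nonempty X]
    [TopologicalSpace.MetrizableSpace X] [MulAction G X] [ContinuousConstSMul G X]
    (hXmin : IsMinimalFlow G X) :
    ∃ Y : GFlow G,
      CompactSpace Y.carrier ∧ T2Space Y.carrier ∧ Nonempty Y.carrier ∧
      TopologicalSpace.MetrizableSpace Y.carrier ∧ ContinuousConstSMul G Y.carrier ∧
      IsMinimalFlow G Y.carrier ∧
      (∀ (g : G) (y : Y.carrier), g • y = y → g = 1) ∧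
      FlowsDisjoint G X Y.carrier := by
  let _ := TopologicalSpace.metrizableSpaceMetric X
  exact exists_free_minimal_flow_disjoint_from_general X hXmin
    (TopologicalSpace.countable_countableBasis X) (isPiBase_countableBasis X)
end
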